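/- arXiv:1710.01222 — 2 statements merged into one kernel-verified Lean document; each statement's English description precedes it below -/
import Mathlib

section
/- Let $B(r) = r^{-\alpha} L(r)$ for $r > 0$, where $0 < \alpha m < 2$ ($m \geq 1$ an integer) and $L$ is positive, measurable, locally bounded, and slowly varying at infinity. Then as $T \to \infty$, $\int_{[0,T]^2 \times [0,T]^2} B^m(\|(x'-x, y'-y)\|)\,dx\,dx'\,dy\,dy' \sim T^{4 - \alpha m} L^m(T) \int_{[0,1]^4} \frac{du_1\,dv_1\,du_2\,dv_2}{((v_1-u_1)^2 + (v_2-u_2)^2)^{\alpha m/2}}$. -/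
/-!
Substituting `p = T q` turns the numerator, divided by `T ^ (4 - α m) * L T ^ m`, into
`∫ ρ ^ (-α m) * (L (T ρ) / L T) ^ m` over the unit box, where `ρ = √(distSq q)`
(`integral_box_scale`). Slow variation gives pointwise convergence of the integrand to
`ρ ^ (-α m)` off the null set `ρ = 0`, so dominated convergence finishes the proof.

The majorant is a Potter bound `L (T ρ) / L T ≤ C ρ ^ (-δ)`, uniform in large `T` and `0 < ρ ≤ 2`
(`exists_potter_bound`), with `δ` so small that `(α + δ) m < 2`. It follows from the uniform
convergence theorem for slowly varying functions in additive form (`exists_abs_sub_le`): if `h` is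
measurable and `h (x + u) - h x → 0` for each `u`, the convergence is uniform for `u ∈ [0, 1]`.
Small arguments `T ρ`, where slow variation says nothing, are controlled by boundedness of `L`
near `0`.

Integrability of `ρ ^ (-β)` for `β < 2` (`distSq_integrable`) comes from `a² + b² ≥ |a| |b|`, which
bounds it by the product of the one-dimensional kernels `|a| ^ (-β/2)` and `|b| ^ (-β/2)`.
-/

open MeasureTheory Set Filter

/-! ### Uniform convergence and Potter bounds for slowly varying functions -/

/-- Uniform convergence theorem. The set of increments `w ∈ [0, 2]` that are bad for the base point
`x` has small measure once `x` is large, and likewise for `x + u`; hence some `x + w` with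
`w ∈ [1, 2]` is good for both base points, and `h x`, `h (x + u)` are both close to `h (x + w)`. -/
lemma exists_abs_sub_le (h : ℝ → ℝ) (hm : Measurable h)
    (hc : ∀ u, Tendsto (fun x => h (x + u) - h x) atTop (nhds 0)) {ε : ℝ} (hε : 0 < ε) :
    ∃ X, ∀ x ≥ X, ∀ u ∈ Icc (0:ℝ) 1, |h (x + u) - h x| ≤ ε := by
  set E : ℝ → Set ℝ := fun x => {u | ε / 2 ≤ |h (x + u) - h x|} with hE
  have hEm : ∀ x, MeasurableSet (E x) := fun x =>
    measurableSet_le measurable_const (by fun_prop)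
  have hlim : Tendsto (fun x => (volume.restrict (Icc (0:ℝ) 2)) (E x)) atTop (nhds 0) := by
    have := tendsto_measure_of_ae_tendsto_indicator_of_isFiniteMeasure (L := atTop)
      (μ := volume.restrict (Icc (0:ℝ) 2)) (A := ∅) (As := E) MeasurableSet.empty hEm
      (Eventually.of_forall fun u => by
        have := (hc u).abs
        rw [abs_zero] at this
        filter_upwards [this.eventually_lt_const (half_pos hε)] with x hx
        simp only [hE, mem_ofPred_eq, mem_empty_iff_false, iff_false, not_le]
        exact hx)
    simpa using this
  obtain ⟨X, hX⟩ := eventually_atTop.1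
    (hlim.eventually_lt_const (show (0 : ENNReal) < 1 / 2 by norm_num))
  refine ⟨X, fun x hx u hu => ?_⟩
  have h1 := hX x hx
  have h2 := hX (x + u) (by linarith [hu.1])
  rw [Measure.restrict_apply (hEm _)] at h1 h2
  -- the bad increments for `x + u`, measured from the base point `x`
  have h3 : volume ((fun w => w - u) ⁻¹' (E (x + u) ∩ Icc 0 2)) < 1 / 2 := by
    simpa only [sub_eq_add_neg, measure_preimage_add_right] using h2
  have h4 : ¬ (Icc (1:ℝ) 2 ⊆ (E x ∩ Icc 0 2) ∪ (fun w => w - u) ⁻¹' (E (x + u) ∩ Icc 0 2)) := by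
    intro hs
    have := (measure_mono hs).trans (measure_union_le (μ := volume) _ _)
    have h5 := this.trans_lt (ENNReal.add_lt_add h1 h3)
    norm_num [ENNReal.add_halves] at h5
    simp [ENNReal.inv_two_add_inv_two] at h5
  obtain ⟨w, hw, hw'⟩ := not_subset.1 h4
  simp only [hE, mem_union, mem_inter_iff, mem_ofPred_eq, mem_preimage, mem_Icc, not_or, not_and,
    not_le] at hw'
  obtain ⟨ha, hb⟩ := hw'
  have ha' : |h (x + w) - h x| < ε / 2 := by
    by_contra hcon
    have := ha (not_lt.1 hcon) (by linarith [hw.1])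
    linarith [hw.2]
  have hb' : |h (x + w) - h (x + u)| < ε / 2 := by
    by_contra hcon
    have := hb (by rw [show x + u + (w - u) = x + w by ring]; exact (not_lt.1 hcon))
      (by linarith [hw.1, hu.2])
    linarith [hw.2, hu.1]
  rw [abs_lt] at ha' hb'
  rw [abs_le]
  constructor <;> linarith

/-- Chaining unit steps of `exists_abs_sub_le` bounds the growth of `h` by a linear rate `ε`, as small
as desired. -/
lemma exists_abs_sub_le_linear (h : ℝ → ℝ) (hm : Measurable h)
    (hc : ∀ u, Tendsto (fun x => h (x + u) - h x) atTop (nhds 0)) {ε : ℝ} (hε : 0 < ε) :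
    ∃ X, ∀ x ≥ X, ∀ y ≥ X, |h y - h x| ≤ ε * (|y - x| + 1) := by
  obtain ⟨X, hX⟩ := exists_abs_sub_le h hm hc hε
  have key : ∀ n : ℕ, ∀ x ≥ X, ∀ u : ℝ, 0 ≤ u → u ≤ n → |h (x + u) - h x| ≤ ε * (u + 1) := by
    intro n
    induction n with
    | zero =>
      intro x hx u h0 h1
      have : u = 0 := le_antisymm (by simpa using h1) h0
      subst this
      simp [hε.le]
    | succ n ih =>
      intro x hx u h0 h1
      push_cast at h1
      by_cases hu : u ≤ 1
      · exact (hX x hx u ⟨h0, hu⟩).trans (by nlinarith)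
      · push Not at hu
        have h2 := ih x hx (u - 1) (by linarith) (by linarith)
        have h3 := hX (x + (u - 1)) (by linarith) 1 ⟨by norm_num, le_rfl⟩
        rw [show x + (u - 1) + 1 = x + u by ring] at h3
        rw [abs_le] at h2 h3 ⊢
        constructor <;> linarith
  have key' : ∀ x ≥ X, ∀ y, x ≤ y → |h y - h x| ≤ ε * (y - x + 1) := by
    intro x hx y hy
    obtain ⟨n, hn⟩ := exists_nat_ge (y - x)
    simpa using key n x hx (y - x) (by linarith) hn
  refine ⟨X, fun x hx y hy => ?_⟩
  rcases le_total x y with hxy | hxy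
  · rw [abs_of_nonneg (sub_nonneg.2 hxy)]
    exact key' x hx y hxy
  · rw [abs_sub_comm, abs_sub_comm y x, abs_of_nonneg (sub_nonneg.2 hxy)]
    exact key' y hy x hxy

/-- Potter bound, down to `ρ = 0`: a slowly varying function that is bounded near `0` satisfies
`L (T ρ) / L T ≤ C ρ ^ (-δ)` for all large `T` and all `0 < ρ ≤ 2`. -/
lemma exists_potter_bound (L : ℝ → ℝ) (hLpos : ∀ r > 0, 0 < L r) (hLmeas : Measurable L)
    (hLoc : ∀ T > 0, ∃ M, ∀ s ∈ Set.Ioc (0:ℝ) T, L s ≤ M)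
    (hSV : ∀ t > 0, Tendsto (fun r => L (t * r) / L r) atTop (nhds 1)) {δ : ℝ} (hδ : 0 < δ) :
    ∃ C > 0, ∃ R > 0, ∀ T ≥ R, ∀ ρ, 0 < ρ → ρ ≤ 2 → L (T * ρ) / L T ≤ C * ρ ^ (-δ) := by
  obtain ⟨X, hX⟩ := exists_abs_sub_le_linear (fun x => Real.log (L (Real.exp x))) (by fun_prop) (fun u => by
    have h1 := ((hSV (Real.exp u) (Real.exp_pos u)).comp Real.tendsto_exp_atTop).log one_ne_zero
    rw [Real.log_one] at h1
    refine h1.congr fun x => ?_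
    simp only [Function.comp]
    rw [Real.log_div (hLpos _ (by positivity)).ne' (hLpos _ (by positivity)).ne', Real.exp_add,
      mul_comm (Real.exp u)]) hδ
  have hX' : ∀ s, Real.exp X ≤ s → ∀ t, Real.exp X ≤ t →
      Real.log (L t) - Real.log (L s) ≤ δ * (|Real.log t - Real.log s| + 1) := by
    intro s hs t ht
    have hs0 := (Real.exp_pos X).trans_le hs
    have ht0 := (Real.exp_pos X).trans_le ht
    have := hX (Real.log s) ((Real.le_log_iff_exp_le hs0).2 hs) (Real.log t)
      ((Real.le_log_iff_exp_le ht0).2 ht)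
    simp only [Real.exp_log hs0, Real.exp_log ht0] at this
    exact (le_abs_self _).trans this
  obtain ⟨M, hM⟩ := hLoc (Real.exp X) (Real.exp_pos X)
  set D := |Real.log M - Real.log (L (Real.exp X))|
  refine ⟨Real.exp (3 * δ + D), Real.exp_pos _, Real.exp X, Real.exp_pos X, fun T hT ρ h0 h2 => ?_⟩
  have hT0 := (Real.exp_pos X).trans_le hT
  have hTρ : 0 < T * ρ := by positivity
  have hlog : Real.log (L (T * ρ)) - Real.log (L T) ≤ 3 * δ + D - δ * Real.log ρ := by
    have hD : 0 ≤ D := abs_nonneg _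
    have hl2 : Real.log ρ ≤ 1 := by
      have := Real.log_le_sub_one_of_pos h0
      linarith
    -- below the threshold `exp X`, compare `L (T * ρ)` with the bound `M` instead
    rcases le_total (Real.exp X) (T * ρ) with hc | hc
    · have h1 := hX' T hT (T * ρ) hc
      rw [Real.log_mul hT0.ne' h0.ne', add_sub_cancel_left] at h1
      have h3 : |Real.log ρ| ≤ 2 - Real.log ρ := abs_le.2 ⟨by linarith, by linarith⟩
      nlinarith
    · have h1 := hX' T hT (Real.exp X) le_rfl
      have h3 := Real.log_le_log (hLpos _ hTρ) (hM _ ⟨hTρ, hc⟩)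
      have h4 := le_abs_self (Real.log M - Real.log (L (Real.exp X)))
      have h5 := (Real.le_log_iff_exp_le hT0).2 hT
      have h6 := Real.log_le_log hTρ hc
      rw [Real.log_exp] at h6 h1
      rw [Real.log_mul hT0.ne' h0.ne'] at h6
      rw [abs_of_nonpos (by linarith)] at h1
      nlinarith
  have e1 : L (T * ρ) / L T = Real.exp (Real.log (L (T * ρ)) - Real.log (L T)) := by
    rw [Real.exp_sub, Real.exp_log (hLpos _ hTρ), Real.exp_log (hLpos _ hT0)]
  rw [e1, Real.rpow_def_of_pos h0, ← Real.exp_add]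
  exact Real.exp_le_exp.2 (by linarith)

/-! ### The kernel on the unit box -/

lemma integrable_abs_rpow {γ : ℝ} (hγ : γ < 1) :
    IntegrableOn (fun w : ℝ => |w| ^ (-γ)) (Icc (-1) 1) := by
  have h1 : IntervalIntegrable (fun w : ℝ => |w| ^ (-γ)) volume 0 1 := by
    refine (intervalIntegral.intervalIntegrable_rpow' (r := -γ) (by linarith)).congr ?_
    intro x hx
    rw [uIoc_of_le zero_le_one] at hx
    simp only [abs_of_pos hx.1]
  have h2 : IntervalIntegrable (fun w : ℝ => |w| ^ (-γ)) volume (-1) 0 := by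
    have := (IntervalIntegrable.iff_comp_neg (by simp)).1 h1
    simpa using this.symm
  rw [integrableOn_Icc_iff_integrableOn_Ioc]
  exact (intervalIntegrable_iff_integrableOn_Ioc_of_le (by norm_num)).1 (h2.trans h1)

/-- The box `[0, T]⁴`, with points `(x, x', y, y')`. -/
abbrev box (T : ℝ) : Set (ℝ × ℝ × ℝ × ℝ) :=
  Icc (0:ℝ) T ×ˢ Icc (0:ℝ) T ×ˢ Icc (0:ℝ) T ×ˢ Icc (0:ℝ) T

/-- The squared Euclidean norm of `(x' - x, y' - y)` at `q = (x, x', y, y')`. -/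
abbrev distSq (q : ℝ × ℝ × ℝ × ℝ) : ℝ := (q.2.1 - q.1) ^ 2 + (q.2.2.2 - q.2.2.1) ^ 2

instance isAddHaarMeasure_quad :
    (volume : Measure (ℝ × ℝ × ℝ × ℝ)).IsAddHaarMeasure := by
  have h2 : (volume : Measure (ℝ × ℝ)).IsAddHaarMeasure :=
    inferInstanceAs ((volume : Measure ℝ).prod (volume : Measure ℝ)).IsAddHaarMeasure
  have h3 : (volume : Measure (ℝ × ℝ × ℝ)).IsAddHaarMeasure :=
    inferInstanceAs ((volume : Measure ℝ).prod (volume : Measure (ℝ × ℝ))).IsAddHaarMeasure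
  exact inferInstanceAs ((volume : Measure ℝ).prod (volume : Measure (ℝ × ℝ × ℝ))).IsAddHaarMeasure

/-- The two hyperplanes `x = x'` and `y = y'` are null. -/
lemma ae_ne : ∀ᵐ q : ℝ × ℝ × ℝ × ℝ, q.2.1 - q.1 ≠ 0 ∧ q.2.2.2 - q.2.2.1 ≠ 0 := by
  have aux : ∀ f : ℝ × ℝ × ℝ × ℝ →ₗ[ℝ] ℝ, f ≠ 0 → ∀ᵐ q, f q ≠ 0 := by
    intro f hf
    have := Measure.addHaar_submodule (volume : Measure (ℝ × ℝ × ℝ × ℝ)) (LinearMap.ker f)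
      (by rwa [Ne, LinearMap.ker_eq_top])
    rw [ae_iff]
    convert this using 2
    ext q
    simp
  have h1 := aux (LinearMap.fst ℝ ℝ (ℝ × ℝ) ∘ₗ LinearMap.snd ℝ ℝ (ℝ × ℝ × ℝ)
    - LinearMap.fst ℝ ℝ (ℝ × ℝ × ℝ)) (fun h => by
      have := LinearMap.congr_fun h (0, 1, 0, 0)
      simp at this)
  have h2 := aux (LinearMap.snd ℝ ℝ ℝ ∘ₗ LinearMap.snd ℝ ℝ (ℝ × ℝ) ∘ₗ
    LinearMap.snd ℝ ℝ (ℝ × ℝ × ℝ) - LinearMap.fst ℝ ℝ ℝ ∘ₗ LinearMap.snd ℝ ℝ (ℝ × ℝ) ∘ₗ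
    LinearMap.snd ℝ ℝ (ℝ × ℝ × ℝ)) (fun h => by
      have := LinearMap.congr_fun h (0, 0, 0, 1)
      simp at this)
  filter_upwards [h1, h2] with q hq1 hq2
  exact ⟨by simpa using hq1, by simpa using hq2⟩

lemma distSq_pos {q : ℝ × ℝ × ℝ × ℝ} (h : q.2.1 - q.1 ≠ 0) : 0 < distSq q := by
  have := pow_pos (abs_pos.2 h) 2
  rw [sq_abs] at this
  simp only [distSq]
  positivity

lemma measurableSet_box (T : ℝ) : MeasurableSet (box T) :=
  measurableSet_Icc.prod (measurableSet_Icc.prod (measurableSet_Icc.prod measurableSet_Icc))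

/-- The kernel is dominated by a product of two kernels `|a| ^ (-β/2)`, each integrable after the
shear `(x, x') ↦ (x, x' - x)`. -/
lemma distSq_integrable {β : ℝ} (h0 : 0 < β) (h2 : β < 2) :
    IntegrableOn (fun q => distSq q ^ (-β / 2)) (box 1) := by
  set f : ℝ → ℝ := (Icc (0:ℝ) 1).indicator (fun _ => 1) with hf
  set g : ℝ → ℝ := (Icc (-1:ℝ) 1).indicator (fun w => |w| ^ (-(β / 2))) with hg
  have hfi : Integrable f := by
    rw [hf, integrable_indicator_iff measurableSet_Icc]
    exact integrableOn_const (by simp)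
  have hgi : Integrable g := by
    rw [hg, integrable_indicator_iff measurableSet_Icc]
    exact integrable_abs_rpow (by linarith)
  have hG : Integrable (fun z : ℝ × ℝ => f z.1 * g (z.2 - z.1)) :=
    (measurePreserving_prod_sub (volume : Measure ℝ) volume).integrable_comp_of_integrable
      (hfi.mul_prod hgi)
  have hH : Integrable (fun q : ℝ × ℝ × ℝ × ℝ =>
      (f q.1 * g (q.2.1 - q.1)) * (f q.2.2.1 * g (q.2.2.2 - q.2.2.1))) :=
    ((volume_preserving_prodAssoc (α₁ := ℝ) (β₁ := ℝ) (γ₁ := ℝ × ℝ)).symm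
      MeasurableEquiv.prodAssoc).integrable_comp_of_integrable (hG.mul_prod hG)
  refine Integrable.mono' hH.integrableOn
    (Measurable.aestronglyMeasurable (by fun_prop)) ?_
  filter_upwards [ae_restrict_of_ae ae_ne, ae_restrict_mem (measurableSet_box 1)] with q hq hqb
  obtain ⟨⟨a0, a1⟩, ⟨b0, b1⟩, ⟨c0, c1⟩, ⟨d0, d1⟩⟩ := hqb
  have ha := abs_pos.2 hq.1
  have hb := abs_pos.2 hq.2
  have e1 : f q.1 = 1 := indicator_of_mem (show q.1 ∈ Icc (0:ℝ) 1 from ⟨a0, a1⟩) _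
  have e2 : f q.2.2.1 = 1 := indicator_of_mem (show q.2.2.1 ∈ Icc (0:ℝ) 1 from ⟨c0, c1⟩) _
  have e3 : g (q.2.1 - q.1) = |q.2.1 - q.1| ^ (-(β / 2)) :=
    indicator_of_mem (show q.2.1 - q.1 ∈ Icc (-1:ℝ) 1 from ⟨by linarith, by linarith⟩) _
  have e4 : g (q.2.2.2 - q.2.2.1) = |q.2.2.2 - q.2.2.1| ^ (-(β / 2)) :=
    indicator_of_mem (show q.2.2.2 - q.2.2.1 ∈ Icc (-1:ℝ) 1 from ⟨by linarith, by linarith⟩) _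
  rw [e1, e2, e3, e4, one_mul, one_mul, ← Real.mul_rpow ha.le hb.le,
    Real.norm_of_nonneg (Real.rpow_nonneg (distSq_pos hq.1).le _), neg_div]
  refine Real.rpow_le_rpow_of_nonpos (mul_pos ha hb) ?_ (by linarith)
  simp only [distSq]
  rw [← sq_abs (q.2.1 - q.1), ← sq_abs (q.2.2.2 - q.2.2.1)]
  nlinarith [sq_nonneg (|q.2.1 - q.1| - |q.2.2.2 - q.2.2.1|)]

lemma integral_distSq_pos {β : ℝ} (h0 : 0 < β) (h2 : β < 2) :
    0 < ∫ q in box 1, distSq q ^ (-β / 2) := by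
  rw [integral_pos_iff_support_of_nonneg_ae
    (Eventually.of_forall fun q => Real.rpow_nonneg (by simp only [distSq]; positivity) _)
    (distSq_integrable h0 h2)]
  have hv : (volume.restrict (box 1)) univ = 1 := by
    rw [Measure.restrict_apply_univ, box]
    simp only [Measure.volume_eq_prod, Measure.prod_prod, Real.volume_Icc]
    simp
  have : (Function.support fun q => distSq q ^ (-β / 2)) =ᵐ[volume.restrict (box 1)] univ := by
    rw [eventuallyEq_univ]
    filter_upwards [ae_restrict_of_ae ae_ne] with q hq
    exact (Real.rpow_pos_of_pos (distSq_pos hq.1) _).ne'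
  rw [measure_congr this, hv]
  exact one_pos

open scoped Pointwise in
lemma integral_box_scale (f : ℝ × ℝ × ℝ × ℝ → ℝ) {T : ℝ} (hT : 0 < T) :
    ∫ p in box T, f p = T ^ 4 * ∫ q in box 1, f (T • q) := by
  have hs : T • box 1 = box T := by
    ext p
    rw [mem_smul_set_iff_inv_smul_mem₀ hT.ne']
    have : ∀ x : ℝ, T⁻¹ * x ∈ Icc (0:ℝ) 1 ↔ x ∈ Icc 0 T := by
      intro x
      rw [mem_Icc, mem_Icc, inv_mul_le_one₀ hT, mul_nonneg_iff_of_pos_left (inv_pos.2 hT)]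
    simp only [box, mem_prod, Prod.smul_fst, Prod.smul_snd, smul_eq_mul, this]
  rw [Measure.setIntegral_comp_smul_of_pos volume f (box 1) hT, hs]
  have : Module.finrank ℝ (ℝ × ℝ × ℝ × ℝ) = 4 := by simp
  rw [this, smul_eq_mul, mul_inv_cancel_left₀ (by positivity)]

/-! ### The asymptotic formula -/

theorem stmt_11 (α : ℝ) (m : ℕ) (hm : 1 ≤ m) (hα : 0 < α * m) (hα2 : α * m < 2)
    (L : ℝ → ℝ) (hLpos : ∀ r > 0, 0 < L r) (hLmeas : Measurable L)
    (hLoc : ∀ T > 0, ∃ M, ∀ s ∈ Set.Ioc (0:ℝ) T, L s ≤ M)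
    (hSV : ∀ t > 0, Tendsto (fun r => L (t * r) / L r) atTop (nhds 1))
    (B : ℝ → ℝ) (hB : ∀ r > 0, B r = r ^ (-α) * L r) :
    Tendsto (fun T : ℝ =>
      (∫ p in (Icc (0:ℝ) T ×ˢ Icc (0:ℝ) T ×ˢ Icc (0:ℝ) T ×ˢ Icc (0:ℝ) T),
          (B (Real.sqrt ((p.2.1 - p.1) ^ 2 + (p.2.2.2 - p.2.2.1) ^ 2))) ^ m) /
        (T ^ (4 - α * m) * (L T) ^ m *
          ∫ q in (Icc (0:ℝ) 1 ×ˢ Icc (0:ℝ) 1 ×ˢ Icc (0:ℝ) 1 ×ˢ Icc (0:ℝ) 1),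
            ((q.2.1 - q.1) ^ 2 + (q.2.2.2 - q.2.2.1) ^ 2) ^ (-(α * m) / 2)))
      atTop (nhds 1) := by
  have hm0 : (0:ℝ) < m := by exact_mod_cast hm
  set I := ∫ q in box 1, distSq q ^ (-(α * m) / 2) with hI
  have hIpos : 0 < I := integral_distSq_pos hα hα2
  set J : ℝ → ℝ := fun T => ∫ q in box 1,
    distSq q ^ (-(α * m) / 2) * (L (T * √(distSq q)) / L T) ^ m with hJ
  have hquot : ∀ T > 0, (∫ p in box T, (B (√(distSq p))) ^ m) /
      (T ^ (4 - α * m) * (L T) ^ m * I) = J T / I := by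
    intro T hT
    have hLT := hLpos T hT
    have hint : ∫ q in box 1, B (√(distSq (T • q))) ^ m
        = T ^ (-(α * m)) * L T ^ m * J T := by
      rw [hJ, ← integral_const_mul]
      refine integral_congr_ae ?_
      filter_upwards [ae_restrict_of_ae ae_ne] with q hq
      have hS := distSq_pos hq.1
      have e1 : √(distSq (T • q)) = T * √(distSq q) := by
        rw [show distSq (T • q) = T ^ 2 * distSq q by
          simp only [distSq, Prod.smul_fst, Prod.smul_snd, smul_eq_mul]; ring,
          Real.sqrt_mul (by positivity), Real.sqrt_sq hT.le]
      have hr : 0 < √(distSq q) := Real.sqrt_pos.2 hS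
      rw [e1, hB _ (by positivity), mul_pow, Real.mul_rpow hT.le hr.le, mul_pow,
        ← Real.rpow_mul_natCast hT.le, ← Real.rpow_mul_natCast hr.le, Real.sqrt_eq_rpow,
        ← Real.rpow_mul hS.le, div_pow]
      rw [show -α * m = -(α * m) by ring, show 1 / 2 * -(α * m) = -(α * m) / 2 by ring]
      field_simp
    rw [integral_box_scale _ hT, hint, show 4 - α * m = (4:ℕ) + -(α * m) by push_cast; ring,
      Real.rpow_add hT, Real.rpow_natCast]
    have := Real.rpow_pos_of_pos hT (-(α * m))
    field_simp
  -- it remains to pass to the limit under the integral sign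
  suffices h : Tendsto J atTop (nhds I) by
    have h' := h.div_const I
    rw [div_self hIpos.ne'] at h'
    refine h'.congr' ?_
    filter_upwards [eventually_gt_atTop 0] with T hT
    exact (hquot T hT).symm
  -- `δ` is chosen so that `(α + δ) m = (α m + 2) / 2 < 2`
  set δ := (2 - α * m) / (2 * m) with hδ
  have hδ0 : 0 < δ := div_pos (by linarith) (by positivity)
  have hδm : δ * m = (2 - α * m) / 2 := by rw [hδ]; field_simp
  obtain ⟨C, hC, R, hR, hpot⟩ := exists_potter_bound L hLpos hLmeas hLoc hSV hδ0
  refine tendsto_integral_filter_of_dominated_convergence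
    (fun q => C ^ m * distSq q ^ (-(α * m + δ * m) / 2)) ?_ ?_
    ((distSq_integrable (by linarith) (by linarith)).const_mul _) ?_
  · exact Eventually.of_forall fun T => by
      refine Measurable.aestronglyMeasurable ?_
      fun_prop
  · filter_upwards [eventually_ge_atTop R] with T hT
    filter_upwards [ae_restrict_of_ae ae_ne, ae_restrict_mem (measurableSet_box 1)] with q hq hqb
    obtain ⟨⟨a0, a1⟩, ⟨b0, b1⟩, ⟨c0, c1⟩, ⟨d0, d1⟩⟩ := hqb
    have hS := distSq_pos hq.1
    have hr : 0 < √(distSq q) := Real.sqrt_pos.2 hS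
    have hT0 : 0 < T := hR.trans_le hT
    have hr2 : √(distSq q) ≤ 2 := by
      rw [Real.sqrt_le_left (by norm_num)]
      simp only [distSq]
      nlinarith
    have h1 := hpot T hT _ hr hr2
    have h2 : 0 ≤ L (T * √(distSq q)) / L T :=
      (div_pos (hLpos _ (by positivity)) (hLpos _ hT0)).le
    rw [Real.norm_of_nonneg (by positivity)]
    calc _ ≤ distSq q ^ (-(α * m) / 2) * (C * √(distSq q) ^ (-δ)) ^ m := by gcongr
      _ = C ^ m * (distSq q ^ (-(α * m) / 2) * distSq q ^ (-(δ * m) / 2)) := by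
        rw [mul_pow, ← Real.rpow_mul_natCast hr.le, Real.sqrt_eq_rpow, ← Real.rpow_mul hS.le,
          show 1 / 2 * (-δ * m) = -(δ * m) / 2 by ring]
        ring
      _ = _ := by
        rw [← Real.rpow_add hS, show -(α * m) / 2 + -(δ * m) / 2 = -(α * m + δ * m) / 2 by ring]
  · filter_upwards [ae_restrict_of_ae ae_ne] with q hq
    have h1 := ((hSV _ (Real.sqrt_pos.2 (distSq_pos hq.1))).pow m).const_mul
      (distSq q ^ (-(α * m) / 2))
    simpa [mul_comm] using h1
end

section
/- (Theorem 3 of the paper, constant-weight special case.) Let $\xi(t_1,t_2)$, $(t_1,t_2)\in\mathbb{R}^2$, be a measurable mean-square continuous homogeneous isotropic zero-mean Gaussian random field with covariance $B(r) = r^{-\alpha}L(r)$, $B(0)=1$, where $L$ is slowly varying at infinity and locally bounded, and let $m \geq 1$ with $0 < \alpha < 2/m$. Then $\lim_{T \to \infty} \frac{1}{T^{4-\alpha m} L^m(T)}\, \mathbb{E}\left[\int_0^T\!\!\int_0^T H_m(\xi(t_1,t_2))\,dt_2\,dt_1 - \sum_{i=0}^{[T]-1}\sum_{j=0}^{[T]-1}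 H_m(\xi(i,j))\right]^2 = 0$. -/
open MeasureTheory ProbabilityTheory Set Filter Polynomial

/-!
Write `H` for the `m`-th Hermite polynomial and `g r = B r ^ m`, so that the field `H (ξ t)` has
covariance `m! * g (pdist s t)` (`integral_hermite_hermite`). The lattice sum is the integral over
the window `[0, T]²` of `H (ξ (corner t))`, where `corner t` is the lower-left corner of the unit
cell of `t`, restricted to the cells with indices below `⌊T⌋₊` (`cell_sum`). By Fubini, the mean
square of the difference is at most `m!` times the double integral over the window of the absolute
value of the kernel `kern`, a signed sum of four values of `g` at the distances between `s` or
`corner s` and `t` or `corner t` (`second_moment_le`).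

The function `g` is regularly varying of index `-β`, with `β = α * m < 2`. Two facts about it are
needed. A bounded shift of the argument changes `g` by a factor close to `1` far from the origin
(`reg_shift`, from the uniform convergence theorem `slow_uniform`), so that the four terms of `kern`
cancel up to a relative error `ε` when `s` and `t` are far apart (`kern_bound`). And the integral of
`g (pdist s t)` over `t` in the window is `O(T² g(T))` uniformly in `s` (`reg_integral`, from the
Potter bounds `reg_potter`). Hence the double integral of `|kern|` is `o(T⁴ g(T))`
(`kern_integral`): pairs at bounded distance contribute `O(T²)`, which is negligible because
`T² g(T) → ∞` (`reg_growth`), and the boundary strip not covered by the summed cells has area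
`O(T)`. The normalisation `T ^ (4 - α * m) * L T ^ m` is exactly `T⁴ g(T)`.

The function `g` is handled in additive form, `g r = exp (-β * log r + h (log r))`, with
`h x = m * log (L (exp x))` having increments that vanish at infinity.
-/

/-! ### Hermite polynomials of Gaussian variables -/

lemma integrable_eval_gaussianReal (v : NNReal) (p : ℝ[X]) :
    Integrable (fun x => p.eval x) (gaussianReal 0 v) := by
  induction p using Polynomial.induction_on' with
  | add p q hp hq => exact (hp.add hq).congr (ae_of_all _ fun x => by simp)
  | monomial n a =>
    simp only [eval_monomial]
    refine Integrable.const_mul ?_ a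
    have h := (memLp_id_gaussianReal (μ := 0) (v := v) n).integrable_norm_pow'
    refine h.mono (by fun_prop) (ae_of_all _ fun x => ?_)
    simp

lemma integrable_eval_mul_pdf (p : ℝ[X]) :
    Integrable (fun x => p.eval x * gaussianPDFReal 0 1 x) := by
  have h := integrable_eval_gaussianReal 1 p
  rw [gaussianReal_of_var_ne_zero _ one_ne_zero,
    integrable_withDensity_iff_integrable_smul' (measurable_gaussianPDF 0 1)
      (ae_of_all _ fun x => gaussianPDF_lt_top)] at h
  refine h.congr (ae_of_all _ fun x => ?_)
  simp [toReal_gaussianPDF, mul_comm]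

lemma hasDerivAt_pdf (x : ℝ) :
    HasDerivAt (gaussianPDFReal 0 1) (-x * gaussianPDFReal 0 1 x) x := by
  have h1 : HasDerivAt (fun y : ℝ => -(y - 0) ^ 2 / (2 * ((1 : NNReal) : ℝ))) (-x) x := by
    have := (((hasDerivAt_id x).fun_pow 2).fun_neg).div_const 2
    simp only [sub_zero, NNReal.coe_one, mul_one]
    refine this.congr_deriv ?_
    simp; ring
  have h2 := (h1.exp).const_mul (Real.sqrt (2 * Real.pi * ((1 : NNReal) : ℝ)))⁻¹
  rw [gaussianPDFReal_def]
  refine h2.congr_deriv ?_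
  simp only
  ring

/-- Stein's identity for polynomials: integration by parts against the standard normal density,
whose derivative at `x` is `-x` times the density. -/
lemma stein_poly (p : ℝ[X]) :
    ∫ x, x * p.eval x ∂(gaussianReal 0 1) = ∫ x, (derivative p).eval x ∂(gaussianReal 0 1) := by
  have hd : ∀ x, HasDerivAt (fun x => p.eval x * gaussianPDFReal 0 1 x)
      ((derivative p - X * p).eval x * gaussianPDFReal 0 1 x) x := by
    intro x
    refine ((p.hasDerivAt x).mul (hasDerivAt_pdf x)).congr_deriv ?_
    simp only [eval_sub, eval_mul, eval_X]; ring
  have h0 := integral_eq_zero_of_hasDerivAt_of_integrable hd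
    (integrable_eval_mul_pdf _) (integrable_eval_mul_pdf _)
  have h1 : ∫ x, (derivative p - X * p).eval x ∂(gaussianReal 0 1) = 0 := by
    rw [integral_gaussianReal_eq_integral_smul one_ne_zero]
    refine Eq.trans (integral_congr_ae (ae_of_all _ fun x => ?_)) h0
    simp only [smul_eq_mul, mul_comm]
  have h2 : ∫ x, (derivative p - X * p).eval x ∂(gaussianReal 0 1)
      = ∫ x, (derivative p).eval x ∂(gaussianReal 0 1) - ∫ x, x * p.eval x ∂(gaussianReal 0 1) := by
    rw [← integral_sub (integrable_eval_gaussianReal 1 _)]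
    · simp
    · exact (integrable_eval_gaussianReal 1 (X * p)).congr (ae_of_all _ fun x => by simp)
  linarith

/-- The probabilists' Hermite polynomial with real coefficients. -/
noncomputable def hermiteR (m : ℕ) : ℝ[X] := (hermite m).map (Int.castRingHom ℝ)

lemma hermiteR_zero : hermiteR 0 = 1 := by simp [hermiteR]

lemma hermiteR_succ (m : ℕ) :
    hermiteR (m + 1) = X * hermiteR m - derivative (hermiteR m) := by
  simp [hermiteR, hermite_succ, derivative_map]

/-- `m`-fold Stein identity: under the standard normal law, multiplication by the `m`-th Hermite
polynomial is adjoint to the `m`-th derivative. -/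
lemma integral_hermite_mul (m : ℕ) (p : ℝ[X]) :
    ∫ x, (hermiteR m).eval x * p.eval x ∂(gaussianReal 0 1)
      = ∫ x, (derivative^[m] p).eval x ∂(gaussianReal 0 1) := by
  induction m generalizing p with
  | zero => simp [hermiteR_zero]
  | succ m ih =>
    rw [Function.iterate_succ_apply, ← ih]
    have e : ∀ x, (hermiteR (m + 1)).eval x * p.eval x
        = x * ((hermiteR m) * p).eval x - (derivative (hermiteR m) * p).eval x := by
      intro x
      simp only [hermiteR_succ, eval_sub, eval_mul, eval_X]
      ring
    simp_rw [e]
    rw [integral_sub, stein_poly, ← integral_sub]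
    · congr 1; ext x; simp
    all_goals first
      | exact integrable_eval_gaussianReal 1 _
      | exact (integrable_eval_gaussianReal 1 (X * (hermiteR m * p))).congr
          (ae_of_all _ fun x => by simp)

lemma iterate_derivative_hermite_comp (m : ℕ) (ρ z : ℝ) :
    derivative^[m] ((hermiteR m).comp (C ρ * X + C z)) = C (ρ ^ m * m.factorial) := by
  have key : ∀ (k : ℕ) (p : ℝ[X]), derivative^[k] (p.comp (C ρ * X + C z))
      = C (ρ ^ k) * (derivative^[k] p).comp (C ρ * X + C z) := by
    intro k
    induction k with
    | zero => simp
    | succ k ih =>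
      intro p
      rw [Function.iterate_succ_apply', ih, Function.iterate_succ_apply']
      simp only [derivative_C_mul, derivative_comp, pow_succ, C_mul]
      simp; ring
  have hm : (hermiteR m).natDegree = m := by
    rw [hermiteR, natDegree_map_eq_of_injective (RingHom.injective_int _), natDegree_hermite]
  have hl : derivative^[m] (hermiteR m) = C (m.factorial : ℝ) := by
    have hd : (derivative^[m] (hermiteR m)).natDegree = 0 := by
      have := natDegree_iterate_derivative (hermiteR m) m
      omega
    rw [eq_C_of_natDegree_eq_zero hd, coeff_iterate_derivative]
    simp [hermiteR, Nat.descFactorial_self, coeff_hermite_self]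
  rw [key, hl]; simp

lemma memLp_eval_gaussianReal (u : NNReal) (p : ℝ[X]) :
    MemLp (fun x => p.eval x) 2 (gaussianReal 0 u) := by
  rw [memLp_two_iff_integrable_sq (by fun_prop)]
  exact (integrable_eval_gaussianReal u (p ^ 2)).congr (ae_of_all _ fun x => by simp)

/-- For fixed `z`, the `m`-th derivative of `x ↦ Hₘ(ρ x + z)` is the constant `ρ ^ m * m!`, so the
`m`-fold Stein identity evaluates the inner integral. -/
lemma integral_hermite_hermite_prod (m : ℕ) (ρ : ℝ) (v : NNReal)
    (hI : Integrable (fun p : ℝ × ℝ => (hermiteR m).eval p.1 * (hermiteR m).eval (ρ * p.1 + p.2))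
      ((gaussianReal 0 1).prod (gaussianReal 0 v))) :
    ∫ p, (hermiteR m).eval p.1 * (hermiteR m).eval (ρ * p.1 + p.2)
      ∂((gaussianReal 0 1).prod (gaussianReal 0 v)) = m.factorial * ρ ^ m := by
  rw [integral_prod_symm _ hI]
  have : ∀ z : ℝ, ∫ x, (hermiteR m).eval x * (hermiteR m).eval (ρ * x + z) ∂(gaussianReal 0 1)
      = m.factorial * ρ ^ m := by
    intro z
    have := integral_hermite_mul m ((hermiteR m).comp (C ρ * X + C z))
    rw [iterate_derivative_hermite_comp] at this
    simp only [eval_comp, eval_add, eval_mul, eval_C, eval_X] at this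
    rw [this]; simp [mul_comm]
  simp [this]

section Pair
variable {Ω : Type*} [MeasurableSpace Ω] {P : Measure Ω}

lemma memLp_of_law {X : Ω → ℝ} (hX : Measurable X) {v : NNReal}
    (h : P.map X = gaussianReal 0 v) (p : ℝ[X]) : MemLp (fun ω => p.eval (X ω)) 2 P := by
  have := memLp_eval_gaussianReal v p
  rw [← h] at this
  exact (memLp_map_measure_iff (by fun_prop) hX.aemeasurable).1 this

lemma integral_sq_of_law {X : Ω → ℝ} (hX : Measurable X) {v : NNReal}
    (h : P.map X = gaussianReal 0 v) : ∫ ω, X ω ^ 2 ∂P = v := by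
  have h1 : ∫ x, x ^ 2 ∂(gaussianReal 0 v) = v := by
    have := variance_fun_id_gaussianReal (μ := 0) (v := v)
    rw [variance_eq_integral (by fun_prop)] at this
    simpa using this
  rw [← h1, ← h, integral_map hX.aemeasurable (by fun_prop)]

/-- The law of every combination `a X + b Y` has its variance truncated at `0` by `Real.toNNReal`;
the parallelogram identity for `X + Y` and `X - Y` shows that no truncation occurs, i.e. `ρ ≤ 1`. -/
lemma corr_le_one [IsProbabilityMeasure P] {X Y : Ω → ℝ} (hX : Measurable X)
    (hY : Measurable Y) {ρ : ℝ} (hρ : 0 ≤ ρ)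
    (h : ∀ a b : ℝ, P.map (fun ω => a * X ω + b * Y ω) =
      gaussianReal 0 (Real.toNNReal (a ^ 2 + b ^ 2 + 2 * a * b * ρ))) : ρ ≤ 1 := by
  have hs : ∀ a b : ℝ, ∫ ω, (a * X ω + b * Y ω) ^ 2 ∂P
      = max (a ^ 2 + b ^ 2 + 2 * a * b * ρ) 0 := fun a b => by
    rw [integral_sq_of_law (by fun_prop) (h a b), Real.coe_toNNReal']
  have hi : ∀ a b : ℝ, Integrable (fun ω => (a * X ω + b * Y ω) ^ 2) P := fun a b => by
    have := (memLp_of_law (by fun_prop) (h a b) Polynomial.X).integrable_sq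
    simpa using this
  have e : ∫ ω, (1 * X ω + 1 * Y ω) ^ 2 ∂P + ∫ ω, (1 * X ω + (-1) * Y ω) ^ 2 ∂P
      = 2 * ∫ ω, (1 * X ω + 0 * Y ω) ^ 2 ∂P + 2 * ∫ ω, (0 * X ω + 1 * Y ω) ^ 2 ∂P := by
    rw [← integral_add (hi _ _) (hi _ _), ← integral_const_mul, ← integral_const_mul,
      ← integral_add ((hi _ _).const_mul _) ((hi _ _).const_mul _)]
    congr 1; ext ω; ring
  simp only [hs] at e
  norm_num at e
  rw [max_eq_left (by linarith : (0 : ℝ) ≤ 2 + 2 * ρ)] at e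
  have := le_max_right (2 + -(2 * ρ)) 0
  linarith

/-- Regression of `Y` on `X`: the residual `Y - ρ X` is independent of `X`. The hypothesis only gives
the laws of linear combinations, which determine the joint law through its characteristic
function (Cramér–Wold). -/
lemma map_pair_eq_prod [IsProbabilityMeasure P] {X Y : Ω → ℝ} (hX : Measurable X)
    (hY : Measurable Y) {ρ : ℝ}
    (hρ : 0 ≤ ρ) (hρ1 : ρ ≤ 1)
    (h : ∀ a b : ℝ, P.map (fun ω => a * X ω + b * Y ω) =
      gaussianReal 0 (Real.toNNReal (a ^ 2 + b ^ 2 + 2 * a * b * ρ))) :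
    P.map (fun ω => (X ω, Y ω - ρ * X ω))
      = (gaussianReal 0 1).prod (gaussianReal 0 (Real.toNNReal (1 - ρ ^ 2))) := by
  have : IsProbabilityMeasure (P.map (fun ω => (X ω, Y ω - ρ * X ω))) :=
    Measure.isProbabilityMeasure_map (by fun_prop)
  refine Measure.ext_of_charFunDual (funext fun L => ?_)
  have h1 : 0 ≤ 1 - ρ ^ 2 := by nlinarith
  set a := L (1, 0) with ha
  set b := L (0, 1) with hb
  have hL : ∀ p : ℝ × ℝ, L p = a * p.1 + b * p.2 := by
    intro p
    have : p = p.1 • ((1, 0) : ℝ × ℝ) + p.2 • ((0, 1) : ℝ × ℝ) := by ext <;> simp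
    conv_lhs => rw [this]
    rw [map_add, map_smul, map_smul, ha, hb, smul_eq_mul, smul_eq_mul]; ring
  rw [charFunDual_prod, charFunDual_eq_charFun_map_one, charFunDual_eq_charFun_map_one,
    charFunDual_eq_charFun_map_one, gaussianReal_map_continuousLinearMap,
    gaussianReal_map_continuousLinearMap, Measure.map_map (by fun_prop) (by fun_prop)]
  have e : (⇑L ∘ fun ω => (X ω, Y ω - ρ * X ω)) = fun ω => (a - b * ρ) * X ω + b * Y ω := by
    ext ω; simp [hL]; ring
  rw [e, h, charFun_gaussianReal, charFun_gaussianReal, charFun_gaussianReal, ← Complex.exp_add]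
  have e2 : (a - b * ρ) ^ 2 + b ^ 2 + 2 * (a - b * ρ) * b * ρ = a ^ 2 + b ^ 2 * (1 - ρ ^ 2) := by
    ring
  rw [e2]
  have e3 : 0 ≤ a ^ 2 + b ^ 2 * (1 - ρ ^ 2) := by positivity
  have e4 : (0 : ℝ) ≤ a ^ 2 := by positivity
  have e5 : (0 : ℝ) ≤ b ^ 2 := by positivity
  have e6 : L (0, 0) = 0 := map_zero L
  simp [e6, Real.coe_toNNReal _ e3, Real.coe_toNNReal _ e4, Real.coe_toNNReal _ e5,
    Real.coe_toNNReal _ h1, ← ha, ← hb]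
  ring_nf

/-- Covariance of Hermite polynomials of standard normal variables with correlation `ρ`: write
`Y = ρ X + Z` with `Z` independent of `X`. -/
lemma integral_hermite_hermite [IsProbabilityMeasure P] {X Y : Ω → ℝ} (hX : Measurable X)
    (hY : Measurable Y) {ρ : ℝ}
    (hρ : 0 ≤ ρ)
    (h : ∀ a b : ℝ, P.map (fun ω => a * X ω + b * Y ω) =
      gaussianReal 0 (Real.toNNReal (a ^ 2 + b ^ 2 + 2 * a * b * ρ))) (m : ℕ) :
    ∫ ω, (hermiteR m).eval (X ω) * (hermiteR m).eval (Y ω) ∂P = m.factorial * ρ ^ m := by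
  have hρ1 := corr_le_one hX hY hρ h
  have hl := map_pair_eq_prod hX hY hρ hρ1 h
  have hXl : P.map X = gaussianReal 0 1 := by simpa using h 1 0
  have hYl : P.map Y = gaussianReal 0 1 := by simpa using h 0 1
  have hI : Integrable (fun ω => (hermiteR m).eval (X ω) * (hermiteR m).eval (Y ω)) P :=
    (memLp_of_law hX hXl _).integrable_mul (memLp_of_law hY hYl _)
  have hm : AEMeasurable (fun ω => (X ω, Y ω - ρ * X ω)) P := by fun_prop
  have hc : Continuous (fun p : ℝ × ℝ =>
    (hermiteR m).eval p.1 * (hermiteR m).eval (ρ * p.1 + p.2)) := by fun_prop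
  rw [← integral_hermite_hermite_prod m ρ (Real.toNNReal (1 - ρ ^ 2)), ← hl,
    integral_map hm hc.aestronglyMeasurable]
  · simp
  · rw [← hl, integrable_map_measure hc.aestronglyMeasurable hm]
    refine hI.congr (ae_of_all _ fun ω => ?_)
    simp
end Pair

/-! ### Slowly and regularly varying functions -/

/-- Uniform convergence theorem for slowly varying functions, in additive form. The truncated
oscillation of `h` around `x`, averaged over `[x, x + 2]`, tends to `0` by dominated convergence;
if `u ∈ [0, 1]`, the windows of `x` and `x + u` share `[x + 1, x + 2]`, and comparing both `h x` and
`h (x + u)` with the values of `h` there bounds `h (x + u) - h x`. -/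
lemma slow_uniform {h : ℝ → ℝ} (hm : Measurable h)
    (hs : ∀ u : ℝ, Tendsto (fun x => h (x + u) - h x) atTop (nhds 0)) {ε : ℝ} (hε : 0 < ε) :
    ∃ X, ∀ x ≥ X, ∀ u ∈ Icc (0:ℝ) 1, |h (x + u) - h x| ≤ ε := by
  -- averaged oscillation over a window of length two
  let φ : ℝ → ℝ := fun x => ∫ l in Icc (0:ℝ) 2, min 1 |h (x + l) - h x|
  have hmeas : ∀ x : ℝ, Measurable (fun l => min (1:ℝ) |h (x + l) - h x|) := by
    intro x; fun_prop
  have hb : ∀ x l : ℝ, ‖min (1:ℝ) |h (x + l) - h x|‖ ≤ 1 := by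
    intro x l
    rw [Real.norm_of_nonneg (le_min zero_le_one (abs_nonneg _))]
    exact min_le_left _ _
  have hint : ∀ x : ℝ, ∀ s : Set ℝ, volume s ≠ ⊤ →
      IntegrableOn (fun l => min (1:ℝ) |h (x + l) - h x|) s := by
    intro x s hs
    exact Measure.integrableOn_of_bounded hs (hmeas x).aestronglyMeasurable
      (ae_of_all _ (hb x))
  have hφ : Tendsto φ atTop (nhds 0) := by
    have := tendsto_integral_filter_of_dominated_convergence (l := atTop)
      (μ := volume.restrict (Icc (0:ℝ) 2)) (F := fun x l => min (1:ℝ) |h (x + l) - h x|)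
      (f := fun _ => (0:ℝ)) (fun _ => (1:ℝ))
      (Eventually.of_forall fun x => (hmeas x).aestronglyMeasurable)
      (Eventually.of_forall fun x => ae_of_all _ (hb x))
      (by simp)
      (ae_of_all _ fun l => by
        have h1 := (hs l).abs
        have h2 := (tendsto_const_nhds (x := (1:ℝ)) (f := atTop)).min h1
        simpa using h2)
    simpa using this
  set δ := min (1/2) ε with hδ
  have hδ0 : 0 < δ := by positivity
  obtain ⟨X, hX⟩ := eventually_atTop.1 (hφ.eventually (gt_mem_nhds (half_pos hδ0)))
  refine ⟨X, fun x hx u hu => ?_⟩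
  have h1 := hX x hx
  have h2 := hX (x + u) (by linarith [hu.1])
  have key : min 1 |h (x + u) - h x| ≤ φ (x + u) + φ x := by
    have e1 : ∫ l in Icc (1:ℝ) 2, min 1 |h (x + l) - h x| ≤ φ x :=
      setIntegral_mono_set (hint x _ (by simp)) (ae_of_all _ fun l => by positivity)
        (Icc_subset_Icc (by norm_num) le_rfl).eventuallyLE
    have e2 : ∫ l in Icc (1:ℝ) 2, min 1 |h (x + l) - h (x + u)| ≤ φ (x + u) := by
      have : ∫ l in Icc (1:ℝ) 2, min 1 |h (x + l) - h (x + u)|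
          = ∫ l in Icc (1 - u) (2 - u), min 1 |h (x + u + l) - h (x + u)| := by
        rw [integral_Icc_eq_integral_Ioc, integral_Icc_eq_integral_Ioc,
          ← intervalIntegral.integral_of_le (by norm_num),
          ← intervalIntegral.integral_of_le (by linarith),
          ← intervalIntegral.integral_comp_sub_right
            (fun l => min 1 |h (x + u + l) - h (x + u)|)]
        congr 1; ext l; ring_nf
      rw [this]
      exact setIntegral_mono_set (hint _ _ (by simp)) (ae_of_all _ fun l => by positivity)
        (Icc_subset_Icc (by linarith [hu.2]) (by linarith [hu.1])).eventuallyLE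
    have i2 : IntegrableOn (fun l => min 1 |h (x + l) - h (x + u)|) (Icc (1:ℝ) 2) := by
      refine Measure.integrableOn_of_bounded (M := 1) (by simp)
        (by have : Measurable (fun l => min 1 |h (x + l) - h (x + u)|) := by fun_prop
            exact this.aestronglyMeasurable) (ae_of_all _ fun l => ?_)
      rw [Real.norm_of_nonneg (by positivity)]
      exact min_le_left _ _
    have e3 : ∫ l in Icc (1:ℝ) 2, min 1 |h (x + u) - h x|
        ≤ ∫ l in Icc (1:ℝ) 2, (min 1 |h (x + l) - h (x + u)| + min 1 |h (x + l) - h x|) := by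
      refine integral_mono (by simp) (i2.add (hint x _ (by simp))) fun l => ?_
      have := abs_sub_le (h (x + u)) (h (x + l)) (h x)
      rw [abs_sub_comm (h (x + u)) (h (x + l))] at this
      simp only
      rcases le_total 1 |h (x + l) - h (x + u)| with a | a
      · rw [min_eq_left a]
        linarith [min_le_left 1 |h (x + u) - h x|,
          le_min zero_le_one (abs_nonneg (h (x + l) - h x))]
      · rcases le_total 1 |h (x + l) - h x| with b | b
        · rw [min_eq_left b]
          linarith [min_le_left 1 |h (x + u) - h x|,
            le_min zero_le_one (abs_nonneg (h (x + l) - h (x + u)))]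
        · rw [min_eq_right a, min_eq_right b]
          linarith [min_le_right 1 |h (x + u) - h x|]
    rw [integral_add i2 (hint x _ (by simp))] at e3
    have e4 : ∫ l in Icc (1:ℝ) 2, min 1 |h (x + u) - h x| = min 1 |h (x + u) - h x| := by
      simp; norm_num
    linarith
  have h3 : min 1 |h (x + u) - h x| < δ := by linarith
  rcases min_lt_iff.1 h3 with h4 | h4
  · have := min_le_left (1/2) ε
    linarith
  · exact h4.le.trans (min_le_right _ _)

/-- Potter bound in additive form: a slowly varying function grows at most at an arbitrarily small
linear rate. -/
lemma slow_potter {h : ℝ → ℝ} (hm : Measurable h)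
    (hs : ∀ u : ℝ, Tendsto (fun x => h (x + u) - h x) atTop (nhds 0)) {ε : ℝ} (hε : 0 < ε) :
    ∃ X, ∀ x ≥ X, ∀ y ≥ x, |h y - h x| ≤ ε * (y - x) + ε := by
  obtain ⟨X, hX⟩ := slow_uniform hm hs hε
  refine ⟨X, fun x hx => ?_⟩
  have : ∀ n : ℕ, ∀ u ∈ Icc (0:ℝ) 1, |h (x + n + u) - h x| ≤ ε * n + ε := by
    intro n
    induction n with
    | zero => intro u hu; simpa using hX x hx u hu
    | succ n ih =>
      intro u hu
      have h1 := ih 1 (by simp)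
      have hn : (0:ℝ) ≤ n := n.cast_nonneg
      have h2 := hX (x + n + 1) (by linarith) u hu
      have h3 := abs_sub_le (h (x + n + 1 + u)) (h (x + n + 1)) (h x)
      push_cast
      rw [← add_assoc]
      linarith
  intro y hy
  have hy0 : 0 ≤ y - x := by linarith
  have h1 := Nat.floor_le hy0
  have h2 := Nat.lt_floor_add_one (y - x)
  have h3 := this ⌊y - x⌋₊ (y - x - ⌊y - x⌋₊) ⟨by linarith, by linarith⟩
  rw [show x + (⌊y - x⌋₊ : ℝ) + (y - x - ⌊y - x⌋₊) = y by ring] at h3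
  nlinarith

section RegVar
variable {h g : ℝ → ℝ} {β : ℝ}

/-- Potter bounds for a function `g` regularly varying of index `-β`; the exponent `(2 + β) / 2` lies
strictly between `β` and `2`. -/
lemma reg_potter (hm : Measurable h)
    (hs : ∀ u : ℝ, Tendsto (fun x => h (x + u) - h x) atTop (nhds 0))
    (hg : ∀ r > 0, g r = Real.exp (-β * Real.log r + h (Real.log r)))
    (hβ : 0 < β) (hβ2 : β < 2) :
    ∃ R ≥ 1, (∀ r ≥ R, ∀ T ≥ r, g r ≤ Real.exp 2 * g T * (T / r) ^ ((2 + β) / 2)) ∧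
      ∀ T ≥ R, g (2 * T) ≤ Real.exp 2 * g T := by
  obtain ⟨X, hX⟩ := slow_potter hm hs (ε := (2 - β) / 2) (by linarith)
  refine ⟨max 1 (Real.exp X), le_max_left _ _, fun r hr T hT => ?_, fun T hT => ?_⟩
  · have r0 : 0 < r := lt_of_lt_of_le one_pos ((le_max_left _ _).trans hr)
    have T0 : 0 < T := r0.trans_le hT
    have hXr : X ≤ Real.log r := (Real.le_log_iff_exp_le r0).2 ((le_max_right _ _).trans hr)
    have hrT : Real.log r ≤ Real.log T := Real.log_le_log r0 hT
    have := (abs_le.1 (hX _ hXr _ hrT)).1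
    rw [hg r r0, hg T T0, Real.rpow_def_of_pos (by positivity), Real.log_div T0.ne' r0.ne',
      ← Real.exp_add, ← Real.exp_add]
    apply Real.exp_le_exp.2
    nlinarith
  · have T0 : 0 < T := lt_of_lt_of_le one_pos ((le_max_left _ _).trans hT)
    have hXr : X ≤ Real.log T := (Real.le_log_iff_exp_le T0).2 ((le_max_right _ _).trans hT)
    have l2 : Real.log (2 * T) = Real.log 2 + Real.log T :=
      Real.log_mul two_ne_zero T0.ne'
    have l20 : 0 < Real.log 2 := Real.log_pos (by norm_num)
    have l21 : Real.log 2 < 1 := Real.log_two_lt_d9.trans (by norm_num)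
    have := (abs_le.1 (hX _ hXr (Real.log (2 * T)) (by linarith))).2
    rw [hg (2 * T) (by positivity), hg T T0, ← Real.exp_add]
    apply Real.exp_le_exp.2
    rw [l2] at this ⊢
    nlinarith

/-- A regularly varying function is insensitive, in relative terms, to bounded shifts of its argument:
`4` bounds the change in the distance of two points when each is moved to the corner of its cell. -/
lemma reg_shift (hm : Measurable h)
    (hs : ∀ u : ℝ, Tendsto (fun x => h (x + u) - h x) atTop (nhds 0))
    (hg : ∀ r > 0, g r = Real.exp (-β * Real.log r + h (Real.log r)))
    (hβ : 0 < β) {ε : ℝ} (hε : 0 < ε) :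
    ∃ R ≥ 5, ∀ r ≥ R, ∀ r', |r' - r| ≤ 4 → |g r' - g r| ≤ ε * g r := by
  set δ := min 1 (ε / 2) with hδ
  have δ0 : 0 < δ := by positivity
  have δ1 : δ ≤ 1 := min_le_left _ _
  have δ2 : δ ≤ ε / 2 := min_le_right _ _
  obtain ⟨X, hX⟩ := slow_uniform hm hs (ε := δ / 2) (by positivity)
  set η := min 1 (δ / (2 * β)) with hη
  have η0 : 0 < η := by positivity
  have η1 : η ≤ 1 := min_le_left _ _
  have η2 : β * η ≤ δ / 2 := by
    have : η ≤ δ / (2 * β) := min_le_right _ _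
    rw [le_div_iff₀ (by positivity)] at this
    linarith
  refine ⟨max 5 (max (4 + Real.exp X) (4 + 4 / η)), le_max_left _ _, fun r hr r' hr' => ?_⟩
  have hr5 : 5 ≤ r := (le_max_left _ _).trans hr
  have hrX : 4 + Real.exp X ≤ r := ((le_max_left _ _).trans (le_max_right _ _)).trans hr
  have hrη : 4 + 4 / η ≤ r := ((le_max_right _ _).trans (le_max_right _ _)).trans hr
  have h4 := abs_le.1 hr'
  have r0 : 0 < r := by linarith
  have r'0 : 0 < r' := by linarith
  have hXr : X ≤ Real.log r := (Real.le_log_iff_exp_le r0).2 (by linarith)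
  have hXr' : X ≤ Real.log r' := (Real.le_log_iff_exp_le r'0).2 (by linarith)
  have d1 : Real.log r' - Real.log r ≤ η := by
    have := Real.log_le_sub_one_of_pos (div_pos r'0 r0)
    rw [Real.log_div r'0.ne' r0.ne'] at this
    refine this.trans ?_
    rw [div_sub_one r0.ne', div_le_iff₀ r0]
    have : 4 / η ≤ r := by linarith
    rw [div_le_iff₀ η0] at this
    linarith
  have d2 : Real.log r - Real.log r' ≤ η := by
    have := Real.log_le_sub_one_of_pos (div_pos r0 r'0)
    rw [Real.log_div r0.ne' r'0.ne'] at this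
    refine this.trans ?_
    rw [div_sub_one r'0.ne', div_le_iff₀ r'0]
    have : 4 / η ≤ r' := by linarith
    rw [div_le_iff₀ η0] at this
    linarith
  have hh : |h (Real.log r') - h (Real.log r)| ≤ δ / 2 := by
    rcases le_total (Real.log r) (Real.log r') with c | c
    · have := hX _ hXr (Real.log r' - Real.log r) ⟨by linarith, by linarith⟩
      simpa using this
    · have := hX _ hXr' (Real.log r - Real.log r') ⟨by linarith, by linarith⟩
      rw [abs_sub_comm]
      simpa using this
  set w := (-β * Real.log r' + h (Real.log r')) - (-β * Real.log r + h (Real.log r)) with hw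
  have hwδ : |w| ≤ δ := by
    have hh' := abs_le.1 hh
    rw [abs_le]
    constructor <;> nlinarith
  have e : g r' - g r = (Real.exp w - 1) * g r := by
    rw [hg r r0, hg r' r'0, sub_mul, ← Real.exp_add, hw]; simp
  have gpos : 0 < g r := by rw [hg r r0]; positivity
  rw [e, abs_mul, abs_of_pos gpos]
  have := Real.abs_exp_sub_one_le (hwδ.trans δ1)
  gcongr
  linarith

lemma reg_growth (hm : Measurable h)
    (hs : ∀ u : ℝ, Tendsto (fun x => h (x + u) - h x) atTop (nhds 0))
    (hg : ∀ r > 0, g r = Real.exp (-β * Real.log r + h (Real.log r)))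
    (hβ : 0 < β) (hβ2 : β < 2) :
    Tendsto (fun T => T ^ 2 * g T) atTop atTop := by
  obtain ⟨R, hR1, hR, -⟩ := reg_potter hm hs hg hβ hβ2
  have R0 : 0 < R := by linarith
  have gR : 0 < g R := by rw [hg R R0]; positivity
  have h1 : Tendsto (fun T : ℝ => (g R * Real.exp (-2) * R ^ ((2 + β) / 2)) * T ^ ((2 - β) / 2))
      atTop atTop :=
    (tendsto_rpow_atTop (by linarith)).const_mul_atTop (by positivity)
  refine tendsto_atTop_mono' _ ?_ h1
  filter_upwards [eventually_ge_atTop R] with T hT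
  have T0 : 0 < T := by linarith
  have := hR R le_rfl T hT
  rw [Real.div_rpow T0.le R0.le] at this
  have e : T ^ 2 = T ^ ((2 + β) / 2) * T ^ ((2 - β) / 2) := by
    rw [← Real.rpow_add T0, ← Real.rpow_natCast]; congr 1; push_cast; ring
  rw [e, Real.exp_neg]
  have hRp : 0 < R ^ ((2 + β) / 2) := by positivity
  have hTp : 0 < T ^ ((2 - β) / 2) := by positivity
  rw [mul_div_assoc', le_div_iff₀ hRp] at this
  have k : g R * (Real.exp 2)⁻¹ * R ^ ((2 + β) / 2) ≤ T ^ ((2 + β) / 2) * g T := by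
    rw [mul_right_comm, ← div_eq_mul_inv, div_le_iff₀ (by positivity)]
    linarith
  have := mul_le_mul_of_nonneg_right k hTp.le
  linarith
end RegVar

/-! ### Integrals over the window -/

/-- Euclidean distance in the plane, for points encoded as pairs. -/
noncomputable def pdist (s t : ℝ × ℝ) : ℝ := Real.sqrt ((s.1 - t.1) ^ 2 + (s.2 - t.2) ^ 2)

lemma pdist_eq_dist (s t : ℝ × ℝ) : pdist s t = dist (⟨s.1, s.2⟩ : ℂ) ⟨t.1, t.2⟩ := by
  rw [Complex.dist_eq_re_im]; rfl

lemma pdist_comm (s t : ℝ × ℝ) : pdist s t = pdist t s := by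
  rw [pdist_eq_dist, pdist_eq_dist, dist_comm]

lemma pdist_triangle (s t u : ℝ × ℝ) : pdist s u ≤ pdist s t + pdist t u := by
  simp only [pdist_eq_dist]; exact dist_triangle _ _ _

lemma pdist_nonneg (s t : ℝ × ℝ) : 0 ≤ pdist s t := Real.sqrt_nonneg _

lemma pdist_sq (s t : ℝ × ℝ) : pdist s t ^ 2 = (s.1 - t.1) ^ 2 + (s.2 - t.2) ^ 2 :=
  Real.sq_sqrt (by positivity)

@[fun_prop]
lemma measurable_pdist : Measurable (fun p : (ℝ × ℝ) × (ℝ × ℝ) => pdist p.1 p.2) := by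
  unfold pdist; fun_prop

lemma pdist_le_two {s t : ℝ × ℝ} {T : ℝ} (h1 : |s.1 - t.1| ≤ T) (h2 : |s.2 - t.2| ≤ T) :
    pdist s t ≤ 2 * T := by
  have h0 : 0 ≤ T := (abs_nonneg _).trans h1
  refine Real.sqrt_le_iff.2 ⟨by positivity, ?_⟩
  have a1 := sq_le_sq' (abs_le.1 h1).1 (abs_le.1 h1).2
  have a2 := sq_le_sq' (abs_le.1 h2).1 (abs_le.1 h2).2
  nlinarith

/-- The observation window `[0, T]²`. -/
abbrev window (T : ℝ) : Set (ℝ × ℝ) := Icc (0:ℝ) T ×ˢ Icc (0:ℝ) T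

lemma volume_window_lt_top (T : ℝ) : volume (window T) ≠ ⊤ := by
  rw [Measure.volume_eq_prod, Measure.prod_prod]
  simp [ENNReal.mul_eq_top]

lemma volume_window {T : ℝ} (hT : 0 ≤ T) : volume.real (window T) = T ^ 2 := by
  rw [Measure.volume_eq_prod, measureReal_prod_prod]
  simp [hT]; ring

/-- Points within distance `R` of `s` lie in a square of side `2 R`. -/
lemma integral_near {T R : ℝ} (hR : 0 ≤ R) (s : ℝ × ℝ) :
    ∫ t in window T, (if pdist s t < R then (1:ℝ) else 0) ≤ 4 * R ^ 2 := by
  set Q : Set (ℝ × ℝ) := Icc (s.1 - R) (s.1 + R) ×ˢ Icc (s.2 - R) (s.2 + R) with hQ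
  have hQm : MeasurableSet Q := measurableSet_Icc.prod measurableSet_Icc
  have hQv : volume.real Q = 4 * R ^ 2 := by
    rw [Measure.volume_eq_prod, hQ, measureReal_prod_prod, Real.volume_real_Icc_of_le (by linarith),
      Real.volume_real_Icc_of_le (by linarith)]
    ring
  have hQt : volume Q ≠ ⊤ := by
    rw [Measure.volume_eq_prod, hQ, Measure.prod_prod]
    simp [ENNReal.mul_eq_top]
  have hi : Integrable (Q.indicator (fun _ => (1:ℝ))) :=
    (integrable_indicator_iff hQm).2 (integrableOn_const hQt)
  have hle : ∀ t, (if pdist s t < R then (1:ℝ) else 0) ≤ Q.indicator (fun _ => (1:ℝ)) t := by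
    intro t
    split_ifs with h
    · rw [indicator_of_mem]
      have h1 : |s.1 - t.1| ≤ R := by
        refine le_trans ?_ h.le
        rw [← Real.sqrt_sq_eq_abs]
        exact Real.sqrt_le_sqrt (by nlinarith [sq_nonneg (s.2 - t.2)])
      have h2 : |s.2 - t.2| ≤ R := by
        refine le_trans ?_ h.le
        rw [← Real.sqrt_sq_eq_abs]
        exact Real.sqrt_le_sqrt (by nlinarith [sq_nonneg (s.1 - t.1)])
      rw [abs_le] at h1 h2
      exact ⟨⟨by linarith, by linarith⟩, ⟨by linarith, by linarith⟩⟩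
    · exact indicator_nonneg (fun _ _ => zero_le_one) _
  calc ∫ t in window T, (if pdist s t < R then (1:ℝ) else 0)
      ≤ ∫ t in window T, Q.indicator (fun _ => (1:ℝ)) t := by
        refine integral_mono_of_nonneg (ae_of_all _ fun t => ?_) hi.integrableOn (ae_of_all _ hle)
        simp only [Pi.zero_apply]; split_ifs <;> norm_num
    _ ≤ ∫ t, Q.indicator (fun _ => (1:ℝ)) t :=
        setIntegral_le_integral hi (ae_of_all _ fun t => indicator_nonneg (fun _ _ => zero_le_one) _)
    _ = 4 * R ^ 2 := by rw [integral_indicator hQm]; simp [hQv]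

lemma integral_abs_rpow {δ T s : ℝ} (hδ1 : δ < 1) (hs : s ∈ Icc 0 T) :
    IntegrableOn (fun t => |s - t| ^ (-δ)) (Icc 0 T) ∧
    ∫ t in Icc (0:ℝ) T, |s - t| ^ (-δ) ≤ 2 / (1 - δ) * T ^ (1 - δ) := by
  have hT : 0 ≤ T := hs.1.trans hs.2
  have i0 : ∀ a : ℝ, IntervalIntegrable (fun x : ℝ => x ^ (-δ)) volume 0 a :=
    fun a => intervalIntegral.intervalIntegrable_rpow' (by linarith)
  have v0 : ∀ a : ℝ, ∫ x in (0:ℝ)..a, x ^ (-δ) = a ^ (1 - δ) / (1 - δ) := by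
    intro a
    rw [integral_rpow (Or.inl (by linarith)), Real.zero_rpow (by linarith)]
    rw [sub_zero, show -δ + 1 = 1 - δ by ring]
  -- left of `s`
  have iL : IntervalIntegrable (fun t => |s - t| ^ (-δ)) volume 0 s := by
    have := ((i0 s).comp_sub_left s).symm
    simp only [sub_self, sub_zero] at this
    refine this.congr_ae ?_
    refine (ae_restrict_iff' measurableSet_uIoc).2 (ae_of_all _ fun t ht => ?_)
    rw [uIoc_of_le hs.1] at ht
    simp only
    rw [abs_of_nonneg (by linarith [ht.2])]
  have vL : ∫ t in (0:ℝ)..s, |s - t| ^ (-δ) = s ^ (1 - δ) / (1 - δ) := by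
    have := intervalIntegral.integral_comp_sub_left (a := 0) (b := s) (fun x : ℝ => x ^ (-δ)) s
    rw [sub_self, sub_zero, v0] at this
    rw [← this]
    refine intervalIntegral.integral_congr fun t ht => ?_
    rw [uIcc_of_le hs.1] at ht
    rw [abs_of_nonneg (by linarith [ht.2])]
  -- right of `s`
  have iR : IntervalIntegrable (fun t => |s - t| ^ (-δ)) volume s T := by
    have := (i0 (T - s)).comp_sub_right s
    simp only [zero_add, sub_add_cancel] at this
    refine this.congr_ae ?_
    refine (ae_restrict_iff' measurableSet_uIoc).2 (ae_of_all _ fun t ht => ?_)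
    rw [uIoc_of_le hs.2] at ht
    simp only
    rw [abs_sub_comm, abs_of_nonneg (by linarith [ht.1])]
  have vR : ∫ t in s..T, |s - t| ^ (-δ) = (T - s) ^ (1 - δ) / (1 - δ) := by
    have := intervalIntegral.integral_comp_sub_right (a := s) (b := T) (fun x : ℝ => x ^ (-δ)) s
    rw [sub_self, v0] at this
    rw [← this]
    refine intervalIntegral.integral_congr fun t ht => ?_
    rw [uIcc_of_le hs.2] at ht
    rw [abs_sub_comm, abs_of_nonneg (by linarith [ht.1])]
  have hi := iL.trans iR
  constructor
  · rwa [intervalIntegrable_iff_integrableOn_Icc_of_le hT] at hi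
  · rw [integral_Icc_eq_integral_Ioc, ← intervalIntegral.integral_of_le hT,
      ← intervalIntegral.integral_add_adjacent_intervals iL iR, vL, vR]
    have h1 : s ^ (1 - δ) ≤ T ^ (1 - δ) := Real.rpow_le_rpow hs.1 hs.2 (by linarith)
    have h2 : (T - s) ^ (1 - δ) ≤ T ^ (1 - δ) :=
      Real.rpow_le_rpow (by linarith [hs.2]) (by linarith [hs.1]) (by linarith)
    rw [← add_div, div_mul_eq_mul_div]
    have : 0 < 1 - δ := by linarith
    gcongr
    linarith

section RegVarInt
variable {h g : ℝ → ℝ} {β : ℝ}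

/-- Karamata-type bound: the integral of a regularly varying function of index `-β > -2` of the
distance to a point, over the window, is of order `T² g(T)`, uniformly in the point. -/
lemma reg_integral (hm : Measurable h)
    (hs : ∀ u : ℝ, Tendsto (fun x => h (x + u) - h x) atTop (nhds 0))
    (hg : ∀ r > 0, g r = Real.exp (-β * Real.log r + h (Real.log r)))
    (hβ : 0 < β) (hβ2 : β < 2) (hg1 : ∀ r ≥ 0, g r ≤ 1) (hg0 : ∀ r ≥ 0, 0 ≤ g r) :
    ∃ C > 0, ∀ᶠ T in atTop, ∀ s ∈ window T,
      ∫ t in window T, g (pdist s t) ≤ C * (T ^ 2 * g T) := by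
  obtain ⟨R, hR1, hR, hR2⟩ := reg_potter hm hs hg hβ hβ2
  set γ := (2 + β) / 2 with hγ
  have γ0 : 0 < γ := by positivity
  have γ2 : γ < 2 := by linarith
  set δ := γ / 2 with hδ
  have δ0 : 0 < δ := by positivity
  have δ1 : δ < 1 := by linarith
  have hδ' : 0 < 1 - δ := by linarith
  set D := Real.exp 4 * 2 ^ γ with hD
  have D0 : 0 < D := by positivity
  refine ⟨1 + D * (2 / (1 - δ)) ^ 2, by positivity, ?_⟩
  filter_upwards [eventually_ge_atTop R,
    (reg_growth hm hs hg hβ hβ2).eventually_ge_atTop (4 * R ^ 2)] with T hT hTR s hsT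
  have T0 : 0 < T := by linarith
  have gT0 := hg0 T T0.le
  obtain ⟨i1, b1⟩ := integral_abs_rpow δ1 hsT.1
  obtain ⟨i2, b2⟩ := integral_abs_rpow δ1 hsT.2
  have hpt : ∀ t ∈ window T, t.1 ≠ s.1 → t.2 ≠ s.2 → g (pdist s t) ≤
      (if pdist s t < R then (1:ℝ) else 0)
        + D * g T * T ^ γ * (|s.1 - t.1| ^ (-δ) * |s.2 - t.2| ^ (-δ)) := by
    intro t ht n1 n2
    have a1 : 0 < |s.1 - t.1| := abs_pos.2 (sub_ne_zero.2 n1.symm)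
    have a2 : 0 < |s.2 - t.2| := abs_pos.2 (sub_ne_zero.2 n2.symm)
    split_ifs with hd
    · have := hg1 _ (pdist_nonneg s t)
      have : 0 ≤ D * g T * T ^ γ * (|s.1 - t.1| ^ (-δ) * |s.2 - t.2| ^ (-δ)) := by positivity
      linarith
    · push Not at hd
      have d0 : 0 < pdist s t := by linarith
      have d2 : pdist s t ≤ 2 * T := by
        refine pdist_le_two ?_ ?_ <;> rw [abs_le] <;>
          constructor <;> linarith [hsT.1.1, hsT.1.2, hsT.2.1, hsT.2.2, ht.1.1, ht.1.2, ht.2.1, ht.2.2]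
      have p1 := hR _ hd _ d2
      have p2 := hR2 T hT
      -- `d ^ 2 ≥ |u₁| |u₂|` decouples the coordinates
      have p3 : pdist s t ^ (-γ) ≤ |s.1 - t.1| ^ (-δ) * |s.2 - t.2| ^ (-δ) := by
        rw [← Real.mul_rpow a1.le a2.le]
        have : pdist s t ^ (-γ) = (pdist s t ^ 2) ^ (-δ) := by
          rw [← Real.rpow_natCast, ← Real.rpow_mul d0.le]; congr 1; rw [hδ]; push_cast; ring
        rw [this]
        refine Real.rpow_le_rpow_of_nonpos (by positivity) ?_ (by linarith)
        rw [pdist_sq, ← sq_abs (s.1 - t.1), ← sq_abs (s.2 - t.2)]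
        nlinarith [sq_nonneg (|s.1 - t.1| - |s.2 - t.2|)]
      rw [zero_add]
      calc g (pdist s t) ≤ Real.exp 2 * g (2 * T) * (2 * T / pdist s t) ^ γ := p1
        _ ≤ Real.exp 2 * (Real.exp 2 * g T) * (2 * T / pdist s t) ^ γ := by gcongr
        _ = D * g T * T ^ γ * pdist s t ^ (-γ) := by
            rw [Real.div_rpow (by positivity) d0.le, Real.mul_rpow (by norm_num) T0.le,
              Real.rpow_neg d0.le, hD, show (4:ℝ) = 2 + 2 by norm_num, Real.exp_add]
            field_simp
        _ ≤ _ := by gcongr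
  have inull : ∀ᵐ t : ℝ × ℝ, t.1 ≠ s.1 ∧ t.2 ≠ s.2 := by
    rw [Measure.volume_eq_prod]
    have c1 : ∀ᵐ x : ℝ, x ≠ s.1 := by simp [ae_iff]
    have c2 : ∀ᵐ x : ℝ, x ≠ s.2 := by simp [ae_iff]
    exact (Measure.quasiMeasurePreserving_fst.ae c1).and (Measure.quasiMeasurePreserving_snd.ae c2)
  have iN : IntegrableOn (fun t => if pdist s t < R then (1:ℝ) else 0) (window T) := by
    refine Measure.integrableOn_of_bounded (M := 1) (volume_window_lt_top T) ?_
      (ae_of_all _ fun t => ?_)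
    · refine (Measurable.ite ?_ measurable_const measurable_const).aestronglyMeasurable
      exact measurableSet_lt (measurable_pdist.comp (measurable_const.prodMk measurable_id))
        measurable_const
    · split_ifs <;> simp
  have iP : IntegrableOn (fun t : ℝ × ℝ => |s.1 - t.1| ^ (-δ) * |s.2 - t.2| ^ (-δ)) (window T) := by
    unfold IntegrableOn
    rw [Measure.volume_eq_prod, ← Measure.prod_restrict]
    exact Integrable.mul_prod i1 i2
  have vP : ∫ t in window T, |s.1 - t.1| ^ (-δ) * |s.2 - t.2| ^ (-δ)
      ≤ (2 / (1 - δ) * T ^ (1 - δ)) ^ 2 := by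
    rw [Measure.volume_eq_prod, setIntegral_prod_mul (fun x => |s.1 - x| ^ (-δ))
      (fun x => |s.2 - x| ^ (-δ)), _root_.sq]
    refine mul_le_mul b1 b2 (integral_nonneg fun t => ?_) (by positivity)
    positivity
  calc ∫ t in window T, g (pdist s t)
      ≤ ∫ t in window T, ((if pdist s t < R then (1:ℝ) else 0)
        + D * g T * T ^ γ * (|s.1 - t.1| ^ (-δ) * |s.2 - t.2| ^ (-δ))) := by
        refine integral_mono_of_nonneg (ae_of_all _ fun t => hg0 _ (pdist_nonneg _ _))
          (iN.add (iP.const_mul _)) ?_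
        filter_upwards [ae_restrict_of_ae inull, ae_restrict_mem
          (measurableSet_Icc.prod measurableSet_Icc)] with t ht1 ht2
        exact hpt t ht2 ht1.1 ht1.2
    _ ≤ 4 * R ^ 2 + D * g T * T ^ γ * (2 / (1 - δ) * T ^ (1 - δ)) ^ 2 := by
        rw [integral_add iN (iP.const_mul _), integral_const_mul]
        have := integral_near (T := T) (by linarith : 0 ≤ R) s
        gcongr
    _ = 4 * R ^ 2 + D * (2 / (1 - δ)) ^ 2 * (T ^ 2 * g T) := by
        have : T ^ γ * (T ^ (1 - δ)) ^ 2 = T ^ 2 := by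
          rw [← Real.rpow_natCast, ← Real.rpow_mul T0.le, ← Real.rpow_add T0, ← Real.rpow_natCast]
          congr 1; rw [hδ]; push_cast; ring
        rw [← this]; ring
    _ ≤ _ := by linarith
end RegVarInt

/-! ### Lattice sums and the covariance kernel -/

/-- Lower-left corner of the unit cell containing a point of the positive quadrant. -/
noncomputable def corner (t : ℝ × ℝ) : ℝ × ℝ := ((⌊t.1⌋₊ : ℝ), (⌊t.2⌋₊ : ℝ))

/-- `1` on the cells `[i, i+1) × [j, j+1)` with `i, j < n`, and `0` on the rest of the positive
quadrant. -/
noncomputable def cellInd (n : ℕ) (t : ℝ × ℝ) : ℝ :=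
  if ⌊t.1⌋₊ < n ∧ ⌊t.2⌋₊ < n then 1 else 0

@[fun_prop]
lemma measurable_corner : Measurable corner := by
  unfold corner
  refine Measurable.prodMk ?_ ?_
  · exact measurable_from_nat.comp (Nat.measurable_floor.comp measurable_fst)
  · exact measurable_from_nat.comp (Nat.measurable_floor.comp measurable_snd)

@[fun_prop]
lemma measurable_cellInd (n : ℕ) : Measurable (cellInd n) := by
  unfold cellInd
  refine Measurable.ite (MeasurableSet.inter ?_ ?_) measurable_const measurable_const
  · exact (Nat.measurable_floor.comp measurable_fst) (measurableSet_Iio (a := n))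
  · exact (Nat.measurable_floor.comp measurable_snd) (measurableSet_Iio (a := n))

lemma cellInd_eq (n : ℕ) (t : ℝ × ℝ) : cellInd n t = 0 ∨ cellInd n t = 1 := by
  unfold cellInd; split_ifs <;> simp

lemma measurableSet_window (T : ℝ) : MeasurableSet (window T) :=
  measurableSet_Icc.prod measurableSet_Icc

lemma pdist_corner {t : ℝ × ℝ} {T : ℝ} (ht : t ∈ window T) : pdist t (corner t) ≤ 2 := by
  have h1 := Nat.floor_le ht.1.1
  have h2 := Nat.lt_floor_add_one t.1
  have h3 := Nat.floor_le ht.2.1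
  have h4 := Nat.lt_floor_add_one t.2
  have := pdist_le_two (s := t) (t := corner t) (T := 1) (by
    rw [abs_le]; constructor <;> simp only [corner] <;> linarith) (by
    rw [abs_le]; constructor <;> simp only [corner] <;> linarith)
  linarith

/-- The lattice sum is the window integral of the function that is constant on unit cells, weighted
by `cellInd`. Integrability of that step function is part of the claim. -/
lemma cell_sum (T : ℝ) (hT : 0 ≤ T) (F : ℕ → ℕ → ℝ) :
    IntegrableOn (fun t => cellInd ⌊T⌋₊ t * F ⌊t.1⌋₊ ⌊t.2⌋₊) (window T) ∧
    ∫ t in window T, cellInd ⌊T⌋₊ t * F ⌊t.1⌋₊ ⌊t.2⌋₊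
      = ∑ i ∈ Finset.range ⌊T⌋₊, ∑ j ∈ Finset.range ⌊T⌋₊, F i j := by
  set n := ⌊T⌋₊ with hn
  have hnT : (n : ℝ) ≤ T := Nat.floor_le hT
  let Q : ℕ → ℕ → Set (ℝ × ℝ) := fun i j =>
    Ico (i : ℝ) (i + 1) ×ˢ Ico (j : ℝ) (j + 1)
  have hQm : ∀ i j, MeasurableSet (Q i j) := fun i j => measurableSet_Ico.prod measurableSet_Ico
  have hQt : ∀ i j, volume (Q i j) ≠ ⊤ := fun i j => by
    simp only [Q]
    rw [Measure.volume_eq_prod, Measure.prod_prod]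
    simp
  have hQv : ∀ i j, volume.real (Q i j) = 1 := fun i j => by
    simp only [Q]
    rw [Measure.volume_eq_prod, measureReal_prod_prod, Real.volume_real_Ico_of_le (by linarith),
      Real.volume_real_Ico_of_le (by linarith)]
    simp
  have hpt : ∀ t ∈ window T, cellInd n t * F ⌊t.1⌋₊ ⌊t.2⌋₊
      = ∑ i ∈ Finset.range n, ∑ j ∈ Finset.range n, (Q i j).indicator (fun _ => F i j) t := by
    intro t ht
    have hmem : ∀ i j, t ∈ Q i j ↔ (i = ⌊t.1⌋₊ ∧ j = ⌊t.2⌋₊) := by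
      intro i j
      rw [eq_comm, Nat.floor_eq_iff ht.1.1, eq_comm (a := j), Nat.floor_eq_iff ht.2.1]
      rfl
    have : ∀ i j, (Q i j).indicator (fun _ => F i j) t
        = if j = ⌊t.2⌋₊ then (if i = ⌊t.1⌋₊ then F i j else 0) else 0 := by
      intro i j
      by_cases h : t ∈ Q i j
      · rw [indicator_of_mem h, if_pos ((hmem i j).1 h).2, if_pos ((hmem i j).1 h).1]
      · rw [indicator_of_notMem h]
        rw [hmem] at h
        split_ifs with a b
        · exact absurd ⟨b, a⟩ h
        · rfl
        · rfl
    simp only [this]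
    simp only [Finset.sum_ite_eq', Finset.mem_range, cellInd]
    by_cases h2 : ⌊t.2⌋₊ < n
    · simp [h2]
    · simp [h2]
  have hi : ∀ i j, IntegrableOn ((Q i j).indicator (fun _ => F i j)) (window T) := fun i j =>
    ((integrable_indicator_iff (hQm i j)).2 (integrableOn_const (hQt i j))).integrableOn
  have hi2 : IntegrableOn (fun t => ∑ i ∈ Finset.range n, ∑ j ∈ Finset.range n,
      (Q i j).indicator (fun _ => F i j) t) (window T) :=
    integrable_finsetSum _ fun i _ => integrable_finsetSum _ fun j _ => hi i j
  refine ⟨hi2.congr_fun (fun t ht => (hpt t ht).symm) (measurableSet_window T), ?_⟩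
  rw [setIntegral_congr_fun (measurableSet_window T) hpt, integral_finsetSum _
    (fun i _ => integrable_finsetSum _ fun j _ => hi i j)]
  refine Finset.sum_congr rfl fun i hiN => ?_
  rw [integral_finsetSum _ (fun j _ => hi i j)]
  refine Finset.sum_congr rfl fun j hjN => ?_
  have hsub : Q i j ⊆ window T := by
    have h1 : ((i : ℝ) + 1) ≤ n := by exact_mod_cast Finset.mem_range.1 hiN
    have h2 : ((j : ℝ) + 1) ≤ n := by exact_mod_cast Finset.mem_range.1 hjN
    have h3 : (0:ℝ) ≤ i := i.cast_nonneg
    have h4 : (0:ℝ) ≤ j := j.cast_nonneg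
    rintro t ⟨⟨a, b⟩, c, d⟩
    exact ⟨⟨by linarith, by linarith⟩, ⟨by linarith, by linarith⟩⟩
  rw [setIntegral_indicator (hQm i j), inter_eq_right.2 hsub]
  simp [hQv]

/-- Normalised covariance kernel of the difference between the field and its sampled version. -/
noncomputable def kern (g : ℝ → ℝ) (n : ℕ) (s t : ℝ × ℝ) : ℝ :=
  g (pdist s t) - cellInd n t * g (pdist s (corner t)) - cellInd n s * g (pdist (corner s) t)
    + cellInd n s * cellInd n t * g (pdist (corner s) (corner t))

/-- Where `s` and `t` are closer than `R`, the four terms of `kern` are just bounded by `1`. Elsewhere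
all four values of `g` agree with `g (pdist s t)` up to a relative error `ε`, and they cancel
unless `s` or `t` lies outside the cells that are summed over. -/
lemma kern_bound {g : ℝ → ℝ} (hg0 : ∀ r ≥ 0, 0 ≤ g r) (hg1 : ∀ r ≥ 0, g r ≤ 1) {ε R : ℝ}
    (hε0 : 0 ≤ ε)
    (hR : ∀ r ≥ R, ∀ r', |r' - r| ≤ 4 → |g r' - g r| ≤ ε * g r) (n : ℕ) {T : ℝ} {s t : ℝ × ℝ}
    (hs : s ∈ window T) (ht : t ∈ window T) :
    |kern g n s t| ≤ 4 * (if pdist s t < R then 1 else 0)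
      + (3 * ε + 3 * (1 - cellInd n s) + 3 * (1 - cellInd n t)) * g (pdist s t) := by
  have ds := pdist_corner hs
  have dt := pdist_corner ht
  set s' := corner s
  set t' := corner t
  have n0 := pdist_nonneg s t
  have n1 := pdist_nonneg s t'
  have n2 := pdist_nonneg s' t
  have n3 := pdist_nonneg s' t'
  have a0 := hg0 _ n0
  have b0 := hg1 _ n0
  have a1 := hg0 _ n1
  have b1 := hg1 _ n1
  have a2 := hg0 _ n2
  have b2 := hg1 _ n2
  have a3 := hg0 _ n3
  have b3 := hg1 _ n3
  have t1 := pdist_triangle s t t'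
  have t2 := pdist_triangle s t' t
  have t3 := pdist_triangle s' s t
  have t4 := pdist_triangle s s' t
  have t5 := pdist_triangle s' s t'
  have t6 := pdist_triangle s s' t'
  rw [pdist_comm t' t] at t2
  rw [pdist_comm s' s] at t3 t5
  have e1 : |pdist s t' - pdist s t| ≤ 4 := by rw [abs_le]; constructor <;> linarith
  have e2 : |pdist s' t - pdist s t| ≤ 4 := by rw [abs_le]; constructor <;> linarith
  have e3 : |pdist s' t' - pdist s t| ≤ 4 := by rw [abs_le]; constructor <;> linarith
  by_cases h : pdist s t < R
  · rw [if_pos h]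
    have := mul_nonneg hε0 a0
    unfold kern
    rcases cellInd_eq n s with cs | cs <;> rcases cellInd_eq n t with ct | ct <;>
      rw [cs, ct, abs_le] <;> constructor <;> linarith
  · rw [if_neg h]
    push Not at h
    have f1 := abs_le.1 (hR _ h _ e1)
    have f2 := abs_le.1 (hR _ h _ e2)
    have f3 := abs_le.1 (hR _ h _ e3)
    unfold kern
    rcases cellInd_eq n s with cs | cs <;> rcases cellInd_eq n t with ct | ct <;>
      rw [cs, ct, abs_le] <;> constructor <;> linarith

/-! ### Asymptotics of the kernel -/

section KernInt
variable {h g : ℝ → ℝ} {β : ℝ}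

/-- Lebesgue measure on the window. -/
noncomputable abbrev wMeas (T : ℝ) : Measure (ℝ × ℝ) := volume.restrict (window T)

instance (T : ℝ) : IsFiniteMeasure (wMeas T) :=
  ⟨by simpa using (volume_window_lt_top T).lt_top⟩

lemma integrable_wMeas_prod {T : ℝ} {f : (ℝ × ℝ) × (ℝ × ℝ) → ℝ} (hf : Measurable f) (M : ℝ)
    (hb : ∀ p, |f p| ≤ M) : Integrable f ((wMeas T).prod (wMeas T)) :=
  Integrable.of_bound hf.aestronglyMeasurable M (ae_of_all _ fun p => by simpa using hb p)

/-- A bound `M` on the inner integral, uniform in the outer variable, against an outer weight `w`. -/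
lemma weighted_integral_le {T M : ℝ} {w : ℝ × ℝ → ℝ} {f : (ℝ × ℝ) × (ℝ × ℝ) → ℝ}
    (hw : Measurable w) (hw0 : ∀ s, 0 ≤ w s) (hw1 : ∀ s, w s ≤ 1)
    (hf : Measurable f) (hf0 : ∀ p, 0 ≤ f p) (hf1 : ∀ p, f p ≤ 1)
    (hM : ∀ s ∈ window T, ∫ t in window T, f (s, t) ≤ M) :
    ∫ p, w p.1 * f p ∂((wMeas T).prod (wMeas T)) ≤ M * ∫ s in window T, w s := by
  have hi : Integrable (fun p : (ℝ × ℝ) × (ℝ × ℝ) => w p.1 * f p) ((wMeas T).prod (wMeas T)) := by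
    refine integrable_wMeas_prod (by fun_prop) 1 fun p => ?_
    rw [abs_of_nonneg (mul_nonneg (hw0 _) (hf0 _))]
    exact mul_le_one₀ (hw1 _) (hf0 _) (hf1 _)
  have hwi : Integrable w (wMeas T) :=
    Integrable.of_bound hw.aestronglyMeasurable 1 (ae_of_all _ fun p => by
      rw [Real.norm_of_nonneg (hw0 _)]; exact hw1 _)
  rw [integral_prod _ hi, ← integral_const_mul]
  refine integral_mono_ae hi.integral_prod_left (hwi.const_mul M) ?_
  filter_upwards [ae_restrict_mem (measurableSet_window T)] with s hs
  simp only [integral_const_mul]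
  rw [mul_comm]
  exact mul_le_mul_of_nonneg_right (hM s hs) (hw0 s)

lemma measurable_kern (hgm : Measurable g) (n : ℕ) :
    Measurable (fun p : (ℝ × ℝ) × (ℝ × ℝ) => kern g n p.1 p.2) := by
  have h : ∀ a b : (ℝ × ℝ) × (ℝ × ℝ) → ℝ × ℝ, Measurable a → Measurable b →
      Measurable (fun p => g (pdist (a p) (b p))) := fun a b ha hb =>
    hgm.comp (measurable_pdist.comp (ha.prodMk hb))
  have h1 := h Prod.fst Prod.snd measurable_fst measurable_snd
  have h2 := h Prod.fst (fun p => corner p.2) measurable_fst (by fun_prop)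
  have h3 := h (fun p => corner p.1) Prod.snd (by fun_prop) measurable_snd
  have h4 := h (fun p => corner p.1) (fun p => corner p.2) (by fun_prop) (by fun_prop)
  unfold kern
  fun_prop

lemma abs_kern_le (hg0 : ∀ r ≥ 0, 0 ≤ g r) (hg1 : ∀ r ≥ 0, g r ≤ 1) (n : ℕ) (s t : ℝ × ℝ) :
    |kern g n s t| ≤ 4 := by
  unfold kern
  have a0 := hg0 _ (pdist_nonneg s t)
  have b0 := hg1 _ (pdist_nonneg s t)
  have a1 := hg0 _ (pdist_nonneg s (corner t))
  have b1 := hg1 _ (pdist_nonneg s (corner t))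
  have a2 := hg0 _ (pdist_nonneg (corner s) t)
  have b2 := hg1 _ (pdist_nonneg (corner s) t)
  have a3 := hg0 _ (pdist_nonneg (corner s) (corner t))
  have b3 := hg1 _ (pdist_nonneg (corner s) (corner t))
  rcases cellInd_eq n s with cs | cs <;> rcases cellInd_eq n t with ct | ct <;>
    rw [cs, ct, abs_le] <;> constructor <;> linarith

/-- The double integral of `|kern|` is `o(T⁴ g(T))`. Of the three parts in `kern_bound`, the
near-diagonal one is `O(T²)`, the boundary strip (of area at most `2 T`) contributes `O(T³ g(T))`,
and the remaining one is `ε * O(T⁴ g(T))`. -/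
lemma kern_integral (hm : Measurable h) (hgm : Measurable g)
    (hs : ∀ u : ℝ, Tendsto (fun x => h (x + u) - h x) atTop (nhds 0))
    (hg : ∀ r > 0, g r = Real.exp (-β * Real.log r + h (Real.log r)))
    (hβ : 0 < β) (hβ2 : β < 2) (hg1 : ∀ r ≥ 0, g r ≤ 1) (hg0 : ∀ r ≥ 0, 0 ≤ g r)
    {η : ℝ} (hη : 0 < η) :
    ∀ᶠ T in atTop, ∫ p, |kern g ⌊T⌋₊ p.1 p.2| ∂((wMeas T).prod (wMeas T))
      ≤ η * (T ^ 2 * (T ^ 2 * g T)) := by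
  obtain ⟨C, C0, hC⟩ := reg_integral hm hs hg hβ hβ2 hg1 hg0
  set ε := η / (9 * C) with hε
  have ε0 : 0 < ε := by positivity
  obtain ⟨R, hR5, hR⟩ := reg_shift hm hs hg hβ ε0
  filter_upwards [hC, eventually_ge_atTop 1, eventually_ge_atTop (36 * C / η),
    (reg_growth hm hs hg hβ hβ2).eventually_ge_atTop (48 * R ^ 2 / η)] with T hCT hT1 hTη hTg
  have T0 : 0 < T := by linarith
  set n := ⌊T⌋₊ with hn
  set M := C * (T ^ 2 * g T) with hM
  have gT0 := hg0 T T0.le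
  set ν := (wMeas T).prod (wMeas T) with hν
  let N : (ℝ × ℝ) × (ℝ × ℝ) → ℝ := fun p => if pdist p.1 p.2 < R then 1 else 0
  let G : (ℝ × ℝ) × (ℝ × ℝ) → ℝ := fun p => g (pdist p.1 p.2)
  have Nm : Measurable N :=
    Measurable.ite (measurableSet_lt measurable_pdist measurable_const) measurable_const
      measurable_const
  have Gm : Measurable G := hgm.comp measurable_pdist
  have N0 : ∀ p, 0 ≤ N p := fun p => by simp only [N]; split_ifs <;> norm_num
  have N1 : ∀ p, N p ≤ 1 := fun p => by simp only [N]; split_ifs <;> norm_num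
  have G0 : ∀ p, 0 ≤ G p := fun p => hg0 _ (pdist_nonneg _ _)
  have G1 : ∀ p, G p ≤ 1 := fun p => hg1 _ (pdist_nonneg _ _)
  let w : ℝ × ℝ → ℝ := fun s => 1 - cellInd n s
  have wm : Measurable w := by fun_prop
  have w0 : ∀ s, 0 ≤ w s := fun s => by
    simp only [w]; rcases cellInd_eq n s with e | e <;> rw [e] <;> norm_num
  have w1 : ∀ s, w s ≤ 1 := fun s => by
    simp only [w]; rcases cellInd_eq n s with e | e <;> rw [e] <;> norm_num
  have iN : Integrable N ν :=
    integrable_wMeas_prod Nm 1 fun p => by rw [abs_of_nonneg (N0 p)]; exact N1 p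
  have iG : Integrable G ν :=
    integrable_wMeas_prod Gm 1 fun p => by rw [abs_of_nonneg (G0 p)]; exact G1 p
  have iG1 : Integrable (fun p => w p.1 * G p) ν :=
    integrable_wMeas_prod (by fun_prop) 1 fun p => by
      rw [abs_of_nonneg (mul_nonneg (w0 _) (G0 p))]; exact mul_le_one₀ (w1 _) (G0 p) (G1 p)
  have iG2 : Integrable (fun p => w p.2 * G p) ν :=
    integrable_wMeas_prod (by fun_prop) 1 fun p => by
      rw [abs_of_nonneg (mul_nonneg (w0 _) (G0 p))]; exact mul_le_one₀ (w1 _) (G0 p) (G1 p)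
  have hvol : ∫ s in window T, (1:ℝ) = T ^ 2 := by
    rw [setIntegral_const, smul_eq_mul, mul_one, volume_window T0.le]
  have bN : ∫ p, N p ∂ν ≤ 4 * R ^ 2 * T ^ 2 := by
    have := weighted_integral_le (T := T) (w := fun _ => 1) measurable_const (by simp) (by simp)
      Nm N0 N1 (fun s _ => integral_near (T := T) (by linarith : 0 ≤ R) s)
    rw [hvol] at this
    simpa using this
  have bG : ∫ p, G p ∂ν ≤ M * T ^ 2 := by
    have := weighted_integral_le (T := T) (w := fun _ => 1) measurable_const (by simp) (by simp)
      Gm G0 G1 hCT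
    rw [hvol] at this
    simpa using this
  have bw : ∫ s in window T, w s ≤ 2 * T := by
    obtain ⟨c1, c2⟩ := cell_sum T T0.le (fun _ _ => 1)
    simp only [mul_one] at c1 c2
    have : ∫ s in window T, w s = T ^ 2 - n * n := by
      simp only [w]
      rw [integral_sub (integrable_const _) c1, hvol, c2]
      simp [← hn]
    rw [this]
    have h1 := Nat.lt_floor_add_one T
    have h2 := Nat.floor_le T0.le
    rw [← hn] at h1 h2
    nlinarith
  have M0 : 0 ≤ M := by positivity
  have bG1 : ∫ p, w p.1 * G p ∂ν ≤ M * (2 * T) :=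
    (weighted_integral_le wm w0 w1 Gm G0 G1 hCT).trans (by gcongr)
  have bG2 : ∫ p, w p.2 * G p ∂ν ≤ M * (2 * T) := by
    rw [hν, ← integral_prod_swap]
    refine le_trans (le_of_eq ?_) bG1
    refine integral_congr_ae (ae_of_all _ fun p => ?_)
    simp only [G, Prod.fst_swap, Prod.snd_swap, pdist_comm p.2 p.1]
  have j1 : Integrable (fun p => 4 * N p) ν := iN.const_mul _
  have j2 : Integrable (fun p => 4 * N p + 3 * ε * G p) ν := j1.add (iG.const_mul _)
  have j3 : Integrable (fun p => 4 * N p + 3 * ε * G p + 3 * (w p.1 * G p)) ν :=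
    j2.add (iG1.const_mul _)
  have key : ∫ p, |kern g n p.1 p.2| ∂ν ≤
      ∫ p, (4 * N p + 3 * ε * G p + 3 * (w p.1 * G p) + 3 * (w p.2 * G p)) ∂ν := by
    refine integral_mono_ae ?_ (j3.add (iG2.const_mul _)) ?_
    · exact (integrable_wMeas_prod (measurable_kern hgm n) 4
        fun p => abs_kern_le hg0 hg1 n _ _).abs
    · have : ∀ᵐ p ∂ν, p ∈ window T ×ˢ window T := by
        rw [hν, Measure.prod_restrict]
        exact ae_restrict_mem ((measurableSet_window T).prod (measurableSet_window T))
      filter_upwards [this] with p hp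
      have := kern_bound hg0 hg1 ε0.le hR n hp.1 hp.2
      simp only [N, G, w]
      linarith
  rw [integral_add j3 (iG2.const_mul _), integral_add j2 (iG1.const_mul _),
    integral_add j1 (iG.const_mul _)] at key
  simp only [integral_const_mul] at key
  -- each of the three contributions is at most a third of the target
  have f1 : 16 * R ^ 2 * T ^ 2 ≤ η / 3 * (T ^ 2 * (T ^ 2 * g T)) := by
    rw [div_le_iff₀ hη] at hTg
    have : 0 ≤ T ^ 2 := by positivity
    nlinarith
  have f2 : 3 * ε * (M * T ^ 2) = η / 3 * (T ^ 2 * (T ^ 2 * g T)) := by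
    rw [hε, hM]; field_simp; ring
  have f3 : 12 * (M * T) ≤ η / 3 * (T ^ 2 * (T ^ 2 * g T)) := by
    rw [div_le_iff₀ hη] at hTη
    have e1 : 12 * (M * T) = (36 * C) * (T * (T ^ 2 * g T)) / 3 := by rw [hM]; ring
    have e2 : (36 * C) * (T * (T ^ 2 * g T)) ≤ (T * η) * (T * (T ^ 2 * g T)) := by gcongr
    rw [e1]
    linarith
  have bG' := mul_le_mul_of_nonneg_left bG (by positivity : 0 ≤ 3 * ε)
  linarith
end KernInt

/-! ### Second moments of the difference -/

section Field
variable {Ω : Type*} [MeasurableSpace Ω] {P : Measure Ω} [IsProbabilityMeasure P]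
  {Y : ℝ × ℝ → Ω → ℝ} {g : ℝ → ℝ} {K : ℝ}

/-- For a second-order field `Y` with mixed moments `K * g (pdist s t)`, the mean square of
(integral over the window minus sum over the lattice) is the double integral of `K * kern`, hence at
most that of `K * |kern|`. Fubini makes `t ↦ Y t ω` integrable on the window for almost every `ω`
only; the remaining null set does not affect the mean square. -/
lemma second_moment_le (hY : Measurable (fun p : (ℝ × ℝ) × Ω => Y p.1 p.2))
    (hL : ∀ t, MemLp (Y t) 2 P) (hK : 0 ≤ K)
    (hcov : ∀ s t, ∫ ω, Y s ω * Y t ω ∂P = K * g (pdist s t))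
    (hg0 : ∀ r ≥ 0, 0 ≤ g r) (hg1 : ∀ r ≥ 0, g r ≤ 1) {T : ℝ} (hT : 0 ≤ T) :
    ∫ ω, ((∫ t in window T, Y t ω) - ∑ i ∈ Finset.range ⌊T⌋₊, ∑ j ∈ Finset.range ⌊T⌋₊,
        Y ((i : ℝ), (j : ℝ)) ω) ^ 2 ∂P
      ≤ K * ∫ p, |kern g ⌊T⌋₊ p.1 p.2| ∂((wMeas T).prod (wMeas T)) := by
  set n := ⌊T⌋₊ with hn
  let D : ℝ × ℝ → Ω → ℝ := fun t ω => Y t ω - cellInd n t * Y (corner t) ω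
  have hYc : Measurable (fun p : (ℝ × ℝ) × Ω => Y (corner p.1) p.2) :=
    hY.comp (((measurable_corner).comp measurable_fst).prodMk measurable_snd)
  have hD : Measurable (fun p : (ℝ × ℝ) × Ω => D p.1 p.2) := by
    simp only [D]; fun_prop
  have hDL : ∀ t, MemLp (D t) 2 P := fun t => (hL t).sub ((hL (corner t)).const_mul _)
  have hYY : ∀ s t, Integrable (fun ω => Y s ω * Y t ω) P := fun s t =>
    (hL s).integrable_mul (hL t)
  have hDD : ∀ s t, Integrable (fun ω => D s ω * D t ω) P := fun s t =>
    (hDL s).integrable_mul (hDL t)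
  have hDcov : ∀ s t, ∫ ω, D s ω * D t ω ∂P = K * kern g n s t := by
    intro s t
    have e : ∀ ω, D s ω * D t ω = Y s ω * Y t ω - cellInd n t * (Y s ω * Y (corner t) ω)
        - cellInd n s * (Y (corner s) ω * Y t ω)
        + cellInd n s * cellInd n t * (Y (corner s) ω * Y (corner t) ω) := fun ω => by
      simp only [D]; ring
    have i1 : Integrable (fun ω => Y s ω * Y t ω - cellInd n t * (Y s ω * Y (corner t) ω)) P :=
      (hYY _ _).sub ((hYY _ _).const_mul _)
    have i2 : Integrable (fun ω => Y s ω * Y t ω - cellInd n t * (Y s ω * Y (corner t) ω)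
        - cellInd n s * (Y (corner s) ω * Y t ω)) P := i1.sub ((hYY _ _).const_mul _)
    simp only [e]
    rw [integral_add i2 ((hYY _ _).const_mul _), integral_sub i1 ((hYY _ _).const_mul _),
      integral_sub (hYY _ _) ((hYY _ _).const_mul _)]
    simp only [integral_const_mul, hcov, kern]
    ring
  have hDsq : ∀ t, ∫ ω, D t ω * D t ω ∂P ≤ 4 * K := fun t => by
    rw [hDcov, mul_comm]
    exact mul_le_mul_of_nonneg_right ((le_abs_self _).trans (abs_kern_le hg0 hg1 n t t)) hK
  have hDabs : ∀ s t, ∫ ω, ‖D s ω * D t ω‖ ∂P ≤ 4 * K := by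
    intro s t
    have : ∫ ω, ‖D s ω * D t ω‖ ∂P ≤
        ∫ ω, (1 / 2 * (D s ω * D s ω) + 1 / 2 * (D t ω * D t ω)) ∂P := by
      refine integral_mono (hDD s t).norm
        (((hDD s s).const_mul _).add ((hDD t t).const_mul _)) fun ω => ?_
      simp only [Real.norm_eq_abs]
      rw [abs_le]
      constructor <;> nlinarith [sq_nonneg (D s ω + D t ω), sq_nonneg (D s ω - D t ω)]
    rw [integral_add ((hDD s s).const_mul _) ((hDD t t).const_mul _)] at this
    simp only [integral_const_mul] at this
    linarith [hDsq s, hDsq t]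
  set ν := (wMeas T).prod (wMeas T) with hν
  have hDDm : Measurable (fun q : Ω × ((ℝ × ℝ) × (ℝ × ℝ)) => D q.2.1 q.1 * D q.2.2 q.1) :=
    (hD.comp ((measurable_fst.comp measurable_snd).prodMk measurable_fst)).mul
      (hD.comp ((measurable_snd.comp measurable_snd).prodMk measurable_fst))
  have hInt : Integrable (fun q : Ω × ((ℝ × ℝ) × (ℝ × ℝ)) => D q.2.1 q.1 * D q.2.2 q.1)
      (P.prod ν) := by
    rw [integrable_prod_iff' hDDm.aestronglyMeasurable]
    refine ⟨ae_of_all _ fun p => hDD p.1 p.2, ?_⟩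
    refine Integrable.of_bound (C := 4 * K)
      hDDm.norm.aestronglyMeasurable.prod_swap.integral_prod_right' (ae_of_all _ fun p => ?_)
    rw [Real.norm_of_nonneg (integral_nonneg fun _ => norm_nonneg _)]
    exact hDabs p.1 p.2
  have hYint : ∀ᵐ ω ∂P, Integrable (fun t => Y t ω) (wMeas T) := by
    have hYabs : ∀ t, ∫ ω, ‖Y t ω‖ ∂P ≤ 1 / 2 * K + 1 / 2 := by
      intro t
      have : ∫ ω, ‖Y t ω‖ ∂P ≤ ∫ ω, (1 / 2 * (Y t ω * Y t ω) + 1 / 2) ∂P := by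
        refine integral_mono ((hL t).integrable one_le_two).norm
          (((hYY t t).const_mul _).add (integrable_const _)) fun ω => ?_
        simp only [Real.norm_eq_abs]
        rw [abs_le]
        constructor <;> nlinarith [sq_nonneg (Y t ω + 1), sq_nonneg (Y t ω - 1)]
      rw [integral_add ((hYY t t).const_mul _) (integrable_const _), integral_const_mul,
        hcov] at this
      have := mul_le_mul_of_nonneg_left (hg1 _ (pdist_nonneg t t)) hK
      simp at *
      linarith
    have : Integrable (fun p : (ℝ × ℝ) × Ω => Y p.1 p.2) ((wMeas T).prod P) := by
      rw [integrable_prod_iff hY.aestronglyMeasurable]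
      refine ⟨ae_of_all _ fun t => (hL t).integrable one_le_two, ?_⟩
      refine Integrable.of_bound (C := 1 / 2 * K + 1 / 2)
        hY.norm.aestronglyMeasurable.integral_prod_right' (ae_of_all _ fun p => ?_)
      rw [Real.norm_of_nonneg (integral_nonneg fun _ => norm_nonneg _)]
      exact hYabs _
    exact this.prod_left_ae
  have hdiff : ∀ᵐ ω ∂P, ((∫ t in window T, Y t ω) - ∑ i ∈ Finset.range n, ∑ j ∈ Finset.range n,
        Y ((i : ℝ), (j : ℝ)) ω) ^ 2 = ∫ p, D p.1 ω * D p.2 ω ∂ν := by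
    filter_upwards [hYint] with ω hω
    obtain ⟨c1, c2⟩ := cell_sum T hT (fun i j => Y ((i : ℝ), (j : ℝ)) ω)
    rw [hν, integral_prod_mul (μ := wMeas T) (ν := wMeas T) (fun t => D t ω) (fun t => D t ω),
      ← sq, ← c2]
    congr 1
    exact (integral_sub hω c1).symm
  rw [integral_congr_ae hdiff, integral_integral_swap hInt]
  simp only [hDcov]
  rw [integral_const_mul]
  exact mul_le_mul_of_nonneg_left ((le_abs_self _).trans (abs_integral_le_integral_abs)) hK
end Field

/-! ### The Gaussian field -/

lemma aeval_hermite (m : ℕ) (x : ℝ) :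
    (Polynomial.aeval x (Polynomial.hermite m) : ℝ) = (hermiteR m).eval x := by
  rw [hermiteR, eval_map, aeval_def]; rfl

/-- The additive form of slow variation: `h x = m * log (L (exp x))` has vanishing increments. -/
lemma slow_log {L : ℝ → ℝ} (hLpos : ∀ r > 0, 0 < L r)
    (hSV : ∀ t > 0, Tendsto (fun r => L (t * r) / L r) atTop (nhds 1)) (m : ℕ) (u : ℝ) :
    Tendsto (fun x => m * Real.log (L (Real.exp (x + u))) - m * Real.log (L (Real.exp x)))
      atTop (nhds 0) := by
  have h1 := (hSV (Real.exp u) (Real.exp_pos u)).comp Real.tendsto_exp_atTop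
  have h2 := ((Real.continuousAt_log one_ne_zero).tendsto.comp h1).const_mul (m : ℝ)
  rw [Real.log_one, mul_zero] at h2
  refine h2.congr fun x => ?_
  have a := hLpos _ (Real.exp_pos x)
  have b := hLpos (Real.exp u * Real.exp x) (by positivity)
  simp only [Function.comp]
  rw [Real.log_div b.ne' a.ne', add_comm x u, Real.exp_add]
  ring

theorem stmt_16 {Ω : Type*} [MeasureSpace Ω] [IsProbabilityMeasure (ℙ : Measure Ω)]
    (ξ : ℝ × ℝ → Ω → ℝ)
    (hmeas : Measurable (fun p : (ℝ × ℝ) × Ω => ξ p.1 p.2))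
    (α : ℝ) (m : ℕ) (hm : 1 ≤ m) (hα : 0 < α) (hα2 : α < 2 / m)
    (L : ℝ → ℝ) (hLpos : ∀ r > 0, 0 < L r) (hLmeas : Measurable L)
    (hLoc : ∀ T > 0, ∃ M, ∀ s ∈ Set.Ioc (0:ℝ) T, L s ≤ M)
    (hSV : ∀ t > 0, Tendsto (fun r => L (t * r) / L r) atTop (nhds 1))
    (B : ℝ → ℝ) (hB : ∀ r > 0, B r = r ^ (-α) * L r) (hB0 : B 0 = 1)
    (hGauss : ∀ (k : ℕ) (c : Fin k → ℝ) (x : Fin k → ℝ × ℝ),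
      Measure.map (fun ω => ∑ i, c i * ξ (x i) ω) ℙ =
        gaussianReal 0 (Real.toNNReal (∑ i, ∑ j, c i * c j *
          B (Real.sqrt (((x i).1 - (x j).1) ^ 2 + ((x i).2 - (x j).2) ^ 2))))) :
    Tendsto (fun T : ℝ =>
      (∫ ω, ((∫ t in Icc (0:ℝ) T ×ˢ Icc (0:ℝ) T,
            (Polynomial.aeval (ξ t ω) (Polynomial.hermite m) : ℝ)) -
          ∑ i ∈ Finset.range ⌊T⌋₊, ∑ j ∈ Finset.range ⌊T⌋₊,
            (Polynomial.aeval (ξ ((i : ℝ), (j : ℝ)) ω) (Polynomial.hermite m) : ℝ)) ^ 2 ∂ℙ) /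
        (T ^ (4 - α * m) * (L T) ^ m))
      atTop (nhds 0) := by
  simp only [aeval_hermite]
  have hξ : ∀ t, Measurable (ξ t) := fun t => hmeas.comp (measurable_const.prodMk measurable_id)
  have hlaw2 : ∀ s t, ∀ a b : ℝ, Measure.map (fun ω => a * ξ s ω + b * ξ t ω) ℙ =
      gaussianReal 0 (Real.toNNReal (a ^ 2 + b ^ 2 + 2 * a * b * B (pdist s t))) := by
    intro s t a b
    have h := hGauss 2 ![a, b] ![s, t]
    simp only [Fin.sum_univ_two, Matrix.cons_val_zero, Matrix.cons_val_one] at h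
    rw [h]
    congr 2
    have e1 : Real.sqrt ((s.1 - t.1) ^ 2 + (s.2 - t.2) ^ 2) = pdist s t := rfl
    have e2 : Real.sqrt ((t.1 - s.1) ^ 2 + (t.2 - s.2) ^ 2) = pdist s t := pdist_comm t s
    simp only [e1, e2, sub_self, ne_eq, OfNat.ofNat_ne_zero, not_false_eq_true, zero_pow,
      add_zero, Real.sqrt_zero, hB0]
    ring
  have hlaw1 : ∀ t, Measure.map (ξ t) ℙ = gaussianReal 0 1 := by
    intro t
    have h := hlaw2 t t 1 0
    simpa using h
  have Bpos : ∀ r > 0, 0 < B r := fun r hr => by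
    rw [hB r hr]; exact mul_pos (Real.rpow_pos_of_pos hr _) (hLpos r hr)
  have B0 : ∀ r ≥ 0, 0 ≤ B r := fun r hr => by
    rcases eq_or_lt_of_le (show (0:ℝ) ≤ r from hr) with e | e
    · rw [← e, hB0]; exact zero_le_one
    · exact (Bpos r e).le
  have B1 : ∀ r ≥ 0, B r ≤ 1 := by
    intro r hr
    have e : pdist ((0:ℝ), (0:ℝ)) (r, 0) = r := by
      simp [pdist, Real.sqrt_sq hr]
    have := corr_le_one (P := (ℙ : Measure Ω)) (hξ (0, 0)) (hξ (r, 0)) (B0 _ (pdist_nonneg _ _))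
      (hlaw2 _ _)
    rwa [e] at this
  -- `B` is arbitrary on the negative axis, hence possibly not measurable there
  let g : ℝ → ℝ := fun r => (if r = 0 then 1 else r ^ (-α) * L r) ^ m
  have gB : ∀ r ≥ 0, g r = B r ^ m := by
    intro r hr
    simp only [g]
    split_ifs with e
    · rw [e, hB0]
    · rw [hB r (lt_of_le_of_ne hr (Ne.symm e))]
  have hgm : Measurable g := by
    refine Measurable.pow_const (Measurable.ite (measurableSet_singleton 0) measurable_const ?_) m
    fun_prop
  have hg0 : ∀ r ≥ 0, 0 ≤ g r := fun r hr => by rw [gB r hr]; exact pow_nonneg (B0 r hr) m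
  have hg1 : ∀ r ≥ 0, g r ≤ 1 := fun r hr => by
    rw [gB r hr]; exact pow_le_one₀ (B0 r hr) (B1 r hr)
  let h : ℝ → ℝ := fun x => m * Real.log (L (Real.exp x))
  have hhm : Measurable h := by simp only [h]; fun_prop
  have hg : ∀ r > 0, g r = Real.exp (-(α * m) * Real.log r + h (Real.log r)) := by
    intro r hr
    simp only [g, h]
    rw [if_neg hr.ne', Real.exp_log hr, Real.rpow_def_of_pos hr]
    nth_rewrite 1 [← Real.exp_log (hLpos r hr)]
    rw [← Real.exp_add, ← Real.exp_nat_mul]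
    congr 1
    ring
  have m0 : (0:ℝ) < m := by exact_mod_cast hm
  have hβ : 0 < α * m := mul_pos hα m0
  have hβ2 : α * m < 2 := (lt_div_iff₀ m0).1 hα2
  have hYm : Measurable (fun p : (ℝ × ℝ) × Ω => (hermiteR m).eval (ξ p.1 p.2)) :=
    (hermiteR m).continuous.measurable.comp hmeas
  have hcov : ∀ s t, ∫ ω, (hermiteR m).eval (ξ s ω) * (hermiteR m).eval (ξ t ω) ∂ℙ
      = m.factorial * g (pdist s t) := fun s t => by
    rw [gB _ (pdist_nonneg s t)]
    exact integral_hermite_hermite (hξ s) (hξ t) (B0 _ (pdist_nonneg s t)) (hlaw2 s t) m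
  have hK : (0:ℝ) < m.factorial := by exact_mod_cast m.factorial_pos
  have hden : ∀ T > 0, T ^ (4 - α * m) * L T ^ m = T ^ 2 * (T ^ 2 * g T) := by
    intro T hT
    simp only [g]
    rw [if_neg hT.ne', mul_pow, ← Real.rpow_mul_natCast hT.le, sub_eq_add_neg,
      Real.rpow_add hT, neg_mul]
    norm_cast
    ring
  rw [Metric.tendsto_atTop']
  intro δ hδ
  have hη : 0 < δ / (2 * m.factorial) := by positivity
  have hev := (kern_integral hhm hgm (slow_log hLpos hSV m) hg hβ hβ2 hg1 hg0 hη).and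
    (eventually_gt_atTop 0)
  obtain ⟨T₀, hT₀⟩ := eventually_atTop.1 hev
  refine ⟨T₀, fun T hT => ?_⟩
  obtain ⟨hk, hTpos⟩ := hT₀ T hT.le
  have hm2 := second_moment_le (P := (ℙ : Measure Ω)) hYm
    (fun t => memLp_of_law (hξ t) (hlaw1 t) _) hK.le hcov hg0 hg1 hTpos.le
  rw [hden T hTpos, Real.dist_eq, sub_zero]
  have hD : 0 < T ^ 2 * (T ^ 2 * g T) := by
    have : 0 < g T := by rw [hg T hTpos]; exact Real.exp_pos _
    positivity
  rw [abs_of_nonneg (div_nonneg (integral_nonneg fun ω => sq_nonneg _) hD.le), div_lt_iff₀ hD]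
  calc _ ≤ _ := hm2
    _ ≤ m.factorial * (δ / (2 * m.factorial) * (T ^ 2 * (T ^ 2 * g T))) := by gcongr
    _ = δ / 2 * (T ^ 2 * (T ^ 2 * g T)) := by field_simp
    _ < δ * (T ^ 2 * (T ^ 2 * g T)) := by gcongr; linarith
end
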